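/- arXiv:0712.2837 — 15 statements merged into one kernel-verified Lean document; each statement's English description precedes it below -/
import Mathlib

section
/- Let n ≥ 2 and let w₁, …, w_k : Fin n → ℚ be a linearly independent family of sum-zero weighting vectors. Then for any choice of sum-zero results vectors r₁, …, r_k : Fin n → ℚ, the set of full-ranking profiles p : Equiv.Perm (Fin n) → ℚ satisfying T_{w_i}(p) = r_i for all 1 ≤ i ≤ k is infinite. -/
/-- The positional voting map: `T_w(p)(c) = Σ_σ p(σ) · w(σ⁻¹ c)`. -/
noncomputable def positionalOutcome (n : ℕ) (w : Fin n → ℚ)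
    (p : Equiv.Perm (Fin n) → ℚ) : Fin n → ℚ :=
  fun c => ∑ σ : Equiv.Perm (Fin n), p σ * w (σ⁻¹ c)

lemma ipr_count (n : ℕ) (m m' c c' : Fin n) :
    (∑ σ : Equiv.Perm (Fin n), if σ m = c then (1:ℚ) else 0)
      = ∑ σ : Equiv.Perm (Fin n), if σ m' = c' then (1:ℚ) else 0 := by
  rw [← Equiv.sum_comp (Equiv.mulRight (Equiv.swap m m'))
    (fun σ : Equiv.Perm (Fin n) => if σ m' = c' then (1:ℚ) else 0)]
  rw [← Equiv.sum_comp (Equiv.mulLeft (Equiv.swap c c'))]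
  refine Finset.sum_congr rfl fun σ _ => ?_
  have h : (Equiv.swap c c') (σ m) = c ↔ σ m = c' := by
    rw [Equiv.swap_apply_eq_iff, Equiv.swap_apply_left]
  simp [Equiv.Perm.mul_apply, h]

lemma ipr_count_pos (n : ℕ) (m : Fin n) :
    0 < (∑ σ : Equiv.Perm (Fin n), if σ m = m then (1:ℚ) else 0) := by
  refine Finset.sum_pos' (fun σ _ => by split_ifs <;> norm_num) ⟨1, Finset.mem_univ _, by simp⟩

lemma ipr_cond (n : ℕ) (a : Fin n) (r : Fin n → ℚ) (hr : ∑ c, r c = 0) (m j c : Fin n) (hmj : m ≠ j) :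
    ((n:ℚ) - 1) * (∑ σ : Equiv.Perm (Fin n), if σ m = c then r (σ j) else 0)
      = - ((∑ σ : Equiv.Perm (Fin n), if σ a = a then (1:ℚ) else 0) * r c) := by
  have h1 : ∀ j' : Fin n, j' ∈ Finset.univ.erase m →
      (∑ σ : Equiv.Perm (Fin n), if σ m = c then r (σ j') else 0)
      = ∑ σ : Equiv.Perm (Fin n), if σ m = c then r (σ j) else 0 := by
    intro j' hj'
    have hj' : j' ≠ m := by simpa using hj'
    rw [← Equiv.sum_comp (Equiv.mulRight (Equiv.swap j j'))]
    refine Finset.sum_congr rfl fun σ _ => ?_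
    simp [Equiv.Perm.mul_apply, Equiv.swap_apply_of_ne_of_ne hmj hj'.symm]
  have h2 : ∑ j' : Fin n, (∑ σ : Equiv.Perm (Fin n), if σ m = c then r (σ j') else 0) = 0 := by
    rw [Finset.sum_comm]
    refine Finset.sum_eq_zero fun σ _ => ?_
    split_ifs
    · rw [Equiv.sum_comp σ r, hr]
    · simp
  rw [← Finset.add_sum_erase _ _ (Finset.mem_univ m), Finset.sum_congr rfl h1] at h2
  have h3 : (∑ σ : Equiv.Perm (Fin n), if σ m = c then r (σ m) else 0)
      = (∑ σ : Equiv.Perm (Fin n), if σ a = a then (1:ℚ) else 0) * r c := by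
    rw [← ipr_count n m a c a, Finset.sum_mul]
    refine Finset.sum_congr rfl fun σ _ => ?_
    split_ifs with h <;> simp [h]
  have hn : 1 ≤ n := by have := m.2; omega
  rw [h3, Finset.sum_const, Finset.card_erase_of_mem (Finset.mem_univ m), Finset.card_univ,
    Fintype.card_fin, nsmul_eq_mul, Nat.cast_sub hn] at h2
  push_cast at h2
  linarith

lemma ipr_expand (n : ℕ) (w : Fin n → ℚ) (f : Equiv.Perm (Fin n) → ℚ) (c : Fin n) :
    ∑ σ : Equiv.Perm (Fin n), f σ * w (σ⁻¹ c)
      = ∑ m, w m * ∑ σ : Equiv.Perm (Fin n), if σ m = c then f σ else 0 := by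
  simp_rw [Finset.mul_sum]
  rw [Finset.sum_comm]
  refine Finset.sum_congr rfl fun σ _ => ?_
  rw [Finset.sum_eq_single (σ⁻¹ c)]
  · simp [mul_comm]
  · intro b _ hb
    have : σ b ≠ c := fun h => hb (by simp [← h])
    simp [this]
  · simp

lemma ipr_main (n : ℕ) (a : Fin n) (w r : Fin n → ℚ) (hw : ∑ c, w c = 0) (hr : ∑ c, r c = 0)
    (j c : Fin n) :
    ((n:ℚ) - 1) * ∑ σ : Equiv.Perm (Fin n), r (σ j) * w (σ⁻¹ c)
      = n * (∑ σ : Equiv.Perm (Fin n), if σ a = a then (1:ℚ) else 0) * (r c * w j) := by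
  rw [ipr_expand n w (fun σ => r (σ j)) c, Finset.mul_sum]
  have h3 : (∑ σ : Equiv.Perm (Fin n), if σ j = c then r (σ j) else 0)
      = (∑ σ : Equiv.Perm (Fin n), if σ a = a then (1:ℚ) else 0) * r c := by
    rw [← ipr_count n j a c a, Finset.sum_mul]
    refine Finset.sum_congr rfl fun σ _ => ?_
    split_ifs with h <;> simp [h]
  have h4 : ∀ m ∈ Finset.univ.erase j,
      ((n:ℚ) - 1) * (w m * ∑ σ : Equiv.Perm (Fin n), if σ m = c then r (σ j) else 0)
      = w m * - ((∑ σ : Equiv.Perm (Fin n), if σ a = a then (1:ℚ) else 0) * r c) := by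
    intro m hm
    rw [← ipr_cond n a r hr m j c (by simpa using hm)]
    ring
  rw [← Finset.add_sum_erase _ _ (Finset.mem_univ j), Finset.sum_congr rfl h4, h3,
    ← Finset.sum_mul]
  rw [← Finset.add_sum_erase _ _ (Finset.mem_univ j)] at hw
  rw [eq_neg_of_add_eq_zero_right hw]
  ring

/-- For `n ≥ 2`, linearly independent sum-zero weighting vectors
`w₁, …, w_k` and arbitrary sum-zero results vectors `r₁, …, r_k`, there are
infinitely many full-ranking profiles `p` with `T_{w_i}(p) = r_i` for all `i`. -/
theorem infinite_profiles_with_prescribed_results (n k : ℕ) (hn : 2 ≤ n)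
    (w : Fin k → (Fin n → ℚ)) (hw : LinearIndependent ℚ w)
    (hw0 : ∀ i, ∑ c, w i c = 0)
    (r : Fin k → (Fin n → ℚ)) (hr0 : ∀ i, ∑ c, r i c = 0) :
    {p : Equiv.Perm (Fin n) → ℚ |
      ∀ i : Fin k, positionalOutcome n (w i) p = r i}.Infinite := by
  let a : Fin n := ⟨0, by omega⟩
  set N : ℚ := ∑ σ : Equiv.Perm (Fin n), if σ a = a then (1:ℚ) else 0 with hN
  have hNpos : 0 < N := ipr_count_pos n a
  have hn1 : (0:ℚ) < (n:ℚ) - 1 := by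
    have : (2:ℚ) ≤ n := by exact_mod_cast hn
    linarith
  have hn0 : (0:ℚ) < n := by linarith
  obtain ⟨g, hg⟩ := LinearMap.exists_leftInverse_of_injective (Fintype.linearCombination ℚ w)
    (LinearMap.ker_eq_bot.2 (hw.fintypeLinearCombination_injective))
  have hgw : ∀ i, g (w i) = Pi.single i 1 := by
    intro i
    have := LinearMap.congr_fun hg (Pi.single i 1)
    simpa [Fintype.linearCombination_apply_single] using this
  let A := (Fintype.linearCombination ℚ r).comp g
  have hA : ∀ i, A (w i) = r i := by
    intro i
    simp [A, hgw, Fintype.linearCombination_apply_single]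
  let R : Fin n → Fin n → ℚ := fun j => A (Pi.single j 1)
  have hR : ∀ j, ∑ c, R j c = 0 := by
    intro j
    simp only [R, A, LinearMap.comp_apply, Fintype.linearCombination_apply, Finset.sum_apply,
      Pi.smul_apply, smul_eq_mul]
    rw [Finset.sum_comm]
    refine Finset.sum_eq_zero fun i _ => ?_
    rw [← Finset.mul_sum, hr0, mul_zero]
  have hAR : ∀ v c, A v c = ∑ j, R j c * v j := by
    intro v c
    conv_lhs => rw [pi_eq_sum_univ' v]
    simp [R, Finset.sum_apply, mul_comm]
  let P : ℚ → Equiv.Perm (Fin n) → ℚ := fun t σ => ((n:ℚ) - 1) / (n * N) * (∑ j, R j (σ j)) + t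
  refine Set.infinite_of_injective_forall_mem (f := P) ?_ ?_
  · intro s t h
    simpa [P] using congrFun h 1
  · intro t i
    funext c
    have hc : ∑ σ : Equiv.Perm (Fin n), t * (w i) (σ⁻¹ c) = 0 := by
      rw [← Finset.mul_sum]
      have := ipr_expand n (w i) (fun _ => 1) c
      simp only [one_mul] at this
      rw [this]
      have h2 : ∀ m ∈ Finset.univ, w i m * (∑ σ : Equiv.Perm (Fin n), if σ m = c then (1:ℚ) else 0)
          = w i m * N := fun m _ => by rw [ipr_count n m a c a]
      rw [Finset.sum_congr rfl h2, ← Finset.sum_mul, hw0]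
      simp
    simp only [positionalOutcome, P, add_mul, Finset.sum_add_distrib]
    rw [hc, add_zero, ← hA i, hAR]
    simp_rw [mul_assoc, Finset.sum_mul]
    rw [← Finset.mul_sum, Finset.sum_comm, Finset.mul_sum]
    refine Finset.sum_congr rfl fun j _ => ?_
    have := ipr_main n a (w i) (R j) (hw0 i) (hR j) j c
    rw [← hN] at this
    rw [div_mul_eq_mul_div, this]
    field_simp
end

section
/- Let n ≥ 2 and let λ : Fin m → ℕ be a partition of n (each λ(i) ≥ 1, λ weakly decreasing, Σ_i λ(i) = n). Let w₁, …, w_k : Fin m → ℚ be a linearly independent family of weighting vectors such that Σ_i λ(i)·w_t(i) = 0 for every t (i.e., each extension w̄_t is sum-zero). Then for any sum-zero results vectors r₁, …, r_k : Fin n → ℚ, the set of profiles p : {g : Fin n → Fin m | ∀ i, the fiber g⁻¹(i) has cardinality λ(i)} → ℚ satisfying, for all t and all candidates c, Σ_g p(g)·w_t(g(c)) = r_t(c), is infinite. -/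
/-- Tabloids of shape `λ`: functions `g : Fin n → Fin m` (assigning each candidate
its row) whose fiber over `i` has cardinality `λ i`. -/
def Tabloid (n m : ℕ) (lam : Fin m → ℕ) : Type :=
  {g : Fin n → Fin m // ∀ i, (Finset.univ.filter fun c => g c = i).card = lam i}

noncomputable instance (n m : ℕ) (lam : Fin m → ℕ) : Fintype (Tabloid n m lam) := by
  unfold Tabloid; infer_instance

theorem tab_card_comp {n m : ℕ} (g : Fin n → Fin m) (σ : Equiv.Perm (Fin n)) (i : Fin m) :
    (Finset.univ.filter fun c => g (σ c) = i).card = (Finset.univ.filter fun c => g c = i).card := by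
  apply Finset.card_bij (fun c _ => σ c)
  · intro a ha; simpa using ha
  · intro a _ b _ h; exact σ.injective h
  · intro b hb; exact ⟨σ.symm b, by simpa using hb, by simp⟩

def tabPerm {n m : ℕ} {lam : Fin m → ℕ} (σ : Equiv.Perm (Fin n)) :
    Tabloid n m lam ≃ Tabloid n m lam where
  toFun g := ⟨fun c => g.1 (σ c), fun i => (tab_card_comp g.1 σ i).trans (g.2 i)⟩
  invFun g := ⟨fun c => g.1 (σ.symm c), fun i => (tab_card_comp g.1 σ.symm i).trans (g.2 i)⟩
  left_inv g := by apply Subtype.ext; funext c; simp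
  right_inv g := by apply Subtype.ext; funext c; simp

theorem tabPerm_val {n m : ℕ} {lam : Fin m → ℕ} (σ : Equiv.Perm (Fin n))
    (g : Tabloid n m lam) (c : Fin n) : (tabPerm σ g).1 c = g.1 (σ c) := rfl

theorem tab_nonempty {n m : ℕ} {lam : Fin m → ℕ} (h : ∑ i, lam i = n) :
    Nonempty (Tabloid n m lam) := by
  subst h
  refine ⟨⟨fun c => (finSigmaFinEquiv.symm c).1, fun i => ?_⟩⟩
  have : (Finset.univ : Finset (Fin (lam i))).card = lam i := by simp
  rw [← this]
  symm
  apply Finset.card_bij (fun (a : Fin (lam i)) _ => finSigmaFinEquiv (⟨i, a⟩ : (i : Fin m) × Fin (lam i)))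
  · intro a _; simp
  · intro a _ b _ h
    have := finSigmaFinEquiv.injective h
    simpa using this
  · intro b hb
    obtain ⟨⟨j, a⟩, rfl⟩ := finSigmaFinEquiv.surjective b
    simp at hb
    subst hb
    exact ⟨a, by simp, rfl⟩

theorem tab_sum {n m : ℕ} {lam : Fin m → ℕ} (g : Tabloid n m lam) (v : Fin m → ℚ) :
    ∑ c, v (g.1 c) = ∑ i, (lam i : ℚ) * v i := by
  rw [← Finset.sum_fiberwise_of_maps_to (s := Finset.univ) (t := Finset.univ) (g := g.1) (by simp)]
  apply Finset.sum_congr rfl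
  intro i _
  rw [← g.2 i, Finset.sum_congr rfl (g := fun _ => v i), Finset.sum_const, nsmul_eq_mul]
  intro c hc
  rw [(Finset.mem_filter.1 hc).2]

theorem tab_pair {n m : ℕ} {lam : Fin m → ℕ} (h : ∑ i, lam i = n) (h1 : ∀ i, 1 ≤ lam i)
    (c d : Fin n) (hcd : c ≠ d) (i j : Fin m) (hij : i ≠ j) :
    ∃ g : Tabloid n m lam, g.1 c = i ∧ g.1 d = j := by
  obtain ⟨g⟩ := tab_nonempty h
  have key : ∀ i, ∃ c, g.1 c = i := by
    intro i
    have := h1 i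
    rw [← g.2 i, Nat.succ_le_iff, Finset.card_pos] at this
    obtain ⟨c, hc⟩ := this
    exact ⟨c, (Finset.mem_filter.1 hc).2⟩
  obtain ⟨c0, rfl⟩ := key i
  obtain ⟨d0, rfl⟩ := key j
  have h0 : c0 ≠ d0 := fun h => hij (by rw [h])
  have h2 : c0 ≠ Equiv.swap c c0 d := by
    intro h
    apply hcd
    apply (Equiv.swap c c0).injective
    rw [← h]; simp
  refine ⟨tabPerm ((Equiv.swap c c0).trans (Equiv.swap (Equiv.swap c c0 d) d0)) g, ?_, ?_⟩
  · simp [tabPerm_val, Equiv.swap_apply_of_ne_of_ne h2 h0]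
  · simp [tabPerm_val]

theorem tab_ones {n m : ℕ} (hn : 2 ≤ n) {lam : Fin m → ℕ} (v : Fin m → ℚ)
    (hv : ∑ i, (lam i : ℚ) * v i = 0) (c : Fin n) :
    ∑ g : Tabloid n m lam, v (g.1 c) = 0 := by
  have h1 : ∀ d, ∑ g : Tabloid n m lam, v (g.1 d) = ∑ g : Tabloid n m lam, v (g.1 c) := by
    intro d
    rw [← Equiv.sum_comp (tabPerm (Equiv.swap c d))]
    simp [tabPerm_val]
  have h2 : ∑ d, ∑ g : Tabloid n m lam, v (g.1 d) = 0 := by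
    rw [Finset.sum_comm]
    exact Finset.sum_eq_zero fun g _ => by rw [tab_sum, hv]
  simp only [h1] at h2
  simp at h2
  rcases h2 with h | h
  · omega
  · exact h

theorem tab_dual {n m k : ℕ} (hn : 2 ≤ n) {lam : Fin m → ℕ} (h1 : ∀ i, 1 ≤ lam i)
    (h : ∑ i, lam i = n) (w : Fin k → (Fin m → ℚ)) (hw : LinearIndependent ℚ w)
    (hw0 : ∀ t, ∑ i, (lam i : ℚ) * w t i = 0) (a : Fin k → Fin n → ℚ)
    (ha : ∀ g : Tabloid n m lam, ∑ t, ∑ c, a t c * w t (g.1 c) = 0)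
    (c d : Fin n) (t : Fin k) : a t c = a t d := by
  by_cases hcd : c = d
  · rw [hcd]
  set f : Fin n → Fin m → ℚ := fun c i => ∑ t, a t c * w t i with hf
  have hg : ∀ g : Tabloid n m lam, ∑ c, f c (g.1 c) = 0 := by
    intro g; rw [← ha g, Finset.sum_comm]
  have hsw : ∀ i j, f c i - f d i = f c j - f d j := by
    intro i j
    by_cases hij : i = j
    · rw [hij]
    obtain ⟨g, rfl, rfl⟩ := tab_pair h h1 c d hcd i j hij
    have e1 := hg g
    have e2 := hg (tabPerm (Equiv.swap c d) g)
    have hd : d ∈ (Finset.univ : Finset (Fin n)).erase c := by simp [Ne.symm hcd]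
    rw [← Finset.add_sum_erase _ _ (Finset.mem_univ c), ← Finset.add_sum_erase _ _ hd] at e1 e2
    have e3 : ∑ x ∈ ((Finset.univ : Finset (Fin n)).erase c).erase d,
        f x ((tabPerm (Equiv.swap c d) g).1 x) =
        ∑ x ∈ ((Finset.univ : Finset (Fin n)).erase c).erase d, f x (g.1 x) := by
      apply Finset.sum_congr rfl
      intro x hx
      simp at hx
      simp [tabPerm_val, Equiv.swap_apply_of_ne_of_ne hx.2 hx.1]
    rw [e3] at e2
    have e4 : (tabPerm (Equiv.swap c d) g).1 c = g.1 d := by simp [tabPerm_val]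
    have e5 : (tabPerm (Equiv.swap c d) g).1 d = g.1 c := by simp [tabPerm_val]
    rw [e4, e5] at e2
    linarith
  have hs : ∀ c, ∑ i, (lam i : ℚ) * f c i = 0 := by
    intro c
    simp only [hf, Finset.mul_sum]
    rw [Finset.sum_comm]
    apply Finset.sum_eq_zero
    intro t _
    rw [← mul_zero (a t c), ← hw0 t, Finset.mul_sum]
    exact Finset.sum_congr rfl fun i _ => by ring
  have hz : ∀ j, f c j - f d j = 0 := by
    intro j
    have e : ∑ i, (lam i : ℚ) * (f c i - f d i) = 0 := by
      simp only [mul_sub, Finset.sum_sub_distrib, hs, sub_zero]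
    rw [Finset.sum_congr rfl (fun i _ => by rw [hsw i j]), ← Finset.sum_mul] at e
    have e' : (∑ i, (lam i : ℚ)) = n := by rw [← h]; push_cast; rfl
    rw [e'] at e
    rcases mul_eq_zero.1 e with e | e
    · have : n = 0 := by exact_mod_cast e
      omega
    · exact e
  have := Fintype.linearIndependent_iff.1 hw (fun t => a t c - a t d) (by
    funext j
    have := hz j
    simp only [hf, ← Finset.sum_sub_distrib] at this
    simp only [Finset.sum_apply, Pi.smul_apply, smul_eq_mul, Pi.zero_apply, sub_mul]
    exact this) t
  exact sub_eq_zero.1 this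

theorem tab_exists {n m k : ℕ} (hn : 2 ≤ n) {lam : Fin m → ℕ} (h1 : ∀ i, 1 ≤ lam i)
    (h : ∑ i, lam i = n) (w : Fin k → (Fin m → ℚ)) (hw : LinearIndependent ℚ w)
    (hw0 : ∀ t, ∑ i, (lam i : ℚ) * w t i = 0)
    (r : Fin k → (Fin n → ℚ)) (hr0 : ∀ t, ∑ c, r t c = 0) :
    ∃ p : Tabloid n m lam → ℚ, ∀ t c, ∑ g : Tabloid n m lam, p g * w t (g.1 c) = r t c := by
  let u : Tabloid n m lam → (Fin k × Fin n → ℚ) := fun g x => w x.1 (g.1 x.2)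
  let R : Fin k × Fin n → ℚ := fun x => r x.1 x.2
  have hR : R ∈ Submodule.span ℚ (Set.range u) := by
    by_contra hR
    obtain ⟨F, hF, hF0⟩ := Submodule.exists_dual_map_eq_bot_of_notMem hR inferInstance
    have hex : ∀ x : Fin k × Fin n → ℚ,
        F x = ∑ t, ∑ c, F (fun j => if (t, c) = j then 1 else 0) * x (t, c) := by
      intro x
      rw [LinearMap.pi_apply_eq_sum_univ F x, Fintype.sum_prod_type]
      simp only [smul_eq_mul, mul_comm]
    have hu : ∀ g, F (u g) = 0 := by
      intro g
      have : F (u g) ∈ (Submodule.span ℚ (Set.range u)).map F :=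
        Submodule.mem_map_of_mem (Submodule.subset_span ⟨g, rfl⟩)
      rw [hF0] at this
      simpa using this
    have hc := tab_dual hn h1 h w hw hw0 (fun t c => F (fun j => if (t, c) = j then 1 else 0))
      (fun g => (hex (u g)).symm.trans (hu g))
    apply hF
    rw [hex]
    apply Finset.sum_eq_zero
    intro t _
    rw [Finset.sum_congr rfl (fun c _ => by rw [hc c ⟨0, by omega⟩ t]), ← Finset.mul_sum]
    rw [show ∑ c, R (t, c) = 0 from hr0 t, mul_zero]
  obtain ⟨p, hp⟩ := (Submodule.mem_span_range_iff_exists_fun ℚ).1 hR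
  refine ⟨p, fun t c => ?_⟩
  have := congrFun hp (t, c)
  simpa [u, R] using this

/-- Let `λ : Fin m → ℕ` be a partition of `n ≥ 2`, and let
`w₁, …, w_k : Fin m → ℚ` be linearly independent weighting vectors with
`Σ_i λ(i)·w_t(i) = 0` for each `t`.  Then for any sum-zero results vectors
`r₁, …, r_k : Fin n → ℚ`, there are infinitely many profiles `p` of shape `λ`
with `T_{w_t}(p) = r_t` for every `t`. -/
theorem infinite_partial_profiles_with_prescribed_results (n m k : ℕ) (hn : 2 ≤ n)
    (lam : Fin m → ℕ) (hlam1 : ∀ i, 1 ≤ lam i) (hlam2 : Antitone lam)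
    (hlam3 : ∑ i, lam i = n)
    (w : Fin k → (Fin m → ℚ)) (hw : LinearIndependent ℚ w)
    (hw0 : ∀ t, ∑ i, (lam i : ℚ) * w t i = 0)
    (r : Fin k → (Fin n → ℚ)) (hr0 : ∀ t, ∑ c, r t c = 0) :
    {p : Tabloid n m lam → ℚ |
      ∀ t : Fin k, ∀ c : Fin n,
        ∑ g : Tabloid n m lam, p g * w t (g.1 c) = r t c}.Infinite := by
  obtain ⟨p, hp⟩ := tab_exists hn hlam1 hlam3 w hw hw0 r hr0
  obtain ⟨g0⟩ := tab_nonempty hlam3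
  apply Set.infinite_of_injective_forall_mem (f := fun (q : ℚ) (g : Tabloid n m lam) => p g + q)
  · intro a b hab
    have := congrFun hab g0
    simpa using this
  · intro q t c
    simp only [add_mul, Finset.sum_add_distrib, ← Finset.mul_sum]
    rw [hp, tab_ones hn _ (hw0 t), mul_zero, add_zero]
end

section
/- Let n ≥ 3, let r_app and r_pos be any two sum-zero vectors in Fin n → ℚ, and let w : Fin n → ℚ be any nonzero sum-zero weighting vector. Then the set of ranked approval profiles, i.e., tuples (p₁, …, p_{n−1}) of full-ranking profiles p_i : Equiv.Perm (Fin n) → ℚ, satisfying both Σ_{i=1}^{n−1} T_{â_i}(p_i) = r_app (the approval voting outcome) and T_w(Σ_{i=1}^{n−1} p_i) = r_pos (the positional voting outcome with respect to w), is infinite. -/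
/-- The sum-zero part `â_i` of the approval weighting vector `a_i` whose first
`i+1` entries are `1` and remaining entries are `0` (here `i : Fin (n-1)`,
representing approval of exactly the top `i+1` candidates). -/
def approvalHat (n : ℕ) (i : Fin (n - 1)) : Fin n → ℚ :=
  fun c => (if (c : ℕ) ≤ (i : ℕ) then (1 : ℚ) else 0) - ((i : ℕ) + 1) / n


noncomputable def posLin (n : ℕ) (w : Fin n → ℚ) :
    (Equiv.Perm (Fin n) → ℚ) →ₗ[ℚ] (Fin n → ℚ) where
  toFun := positionalOutcome n w
  map_add' p q := by
    funext c
    simp [positionalOutcome, add_mul, Finset.sum_add_distrib]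
  map_smul' t p := by
    funext c
    simp [positionalOutcome, mul_assoc, Finset.mul_sum]

lemma posLin_apply (n : ℕ) (w : Fin n → ℚ) (p) : positionalOutcome n w p = posLin n w p := rfl

lemma posLin_sub (n : ℕ) (u v : Fin n → ℚ) (p) :
    posLin n (u - v) p = posLin n u p - posLin n v p := by
  funext c
  simp [← posLin_apply, positionalOutcome, mul_sub, Finset.sum_sub_distrib]

lemma sum_posLin (n : ℕ) (w : Fin n → ℚ) (hw : ∑ c, w c = 0) (p) :
    ∑ c, posLin n w p c = 0 := by
  simp only [← posLin_apply, positionalOutcome]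
  rw [Finset.sum_comm]
  refine Finset.sum_eq_zero fun σ _ => ?_
  rw [← Finset.mul_sum, Equiv.sum_comp σ⁻¹ w, hw, mul_zero]

lemma posLin_const (n : ℕ) (w : Fin n → ℚ) (hw : ∑ c, w c = 0) :
    posLin n w (fun _ => 1) = 0 := by
  have key : ∀ c d, posLin n w (fun _ => 1) c = posLin n w (fun _ => 1) d := by
    intro c d
    simp only [← posLin_apply, positionalOutcome, one_mul]
    rw [← Equiv.sum_comp (Equiv.mulLeft (Equiv.swap c d))]
    simp
  funext c
  have h := sum_posLin n w hw (fun _ => 1)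
  rw [Finset.sum_congr rfl (fun d _ => key d c)] at h
  simp only [Finset.sum_const, Finset.card_univ, Fintype.card_fin, nsmul_eq_mul, mul_eq_zero] at h
  rcases h with h | h
  · have := c.pos
    simp at h; omega
  · exact h

lemma posLin_single (n : ℕ) (w : Fin n → ℚ) (σ : Equiv.Perm (Fin n)) (c : Fin n) :
    posLin n w (Pi.single σ 1) c = w (σ⁻¹ c) := by
  simp [← posLin_apply, positionalOutcome, Pi.single_apply]

lemma exists_perm_two {n : ℕ} {a b c d : Fin n} (hab : a ≠ b) (hcd : c ≠ d) :
    ∃ σ : Equiv.Perm (Fin n), σ a = c ∧ σ b = d := by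
  refine ⟨Equiv.swap (Equiv.swap a c b) d * Equiv.swap a c, ?_, by simp⟩
  rw [Equiv.Perm.mul_apply, Equiv.swap_apply_left]
  refine Equiv.swap_apply_of_ne_of_ne ?_ hcd
  intro h
  apply hab
  apply (Equiv.swap a c).injective
  rw [← h, Equiv.swap_apply_left]

lemma posLin_surj (n : ℕ) (w : Fin n → ℚ) (a b : Fin n) (hab : w a ≠ w b)
    (r : Fin n → ℚ) (hr : ∑ c, r c = 0) : ∃ p, posLin n w p = r := by
  have hab' : a ≠ b := fun h => hab (by rw [h])
  have h0 : w a - w b ≠ 0 := sub_ne_zero.2 hab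
  have basic : ∀ d c, ∃ p, posLin n w p = (Pi.single c 1 - Pi.single d 1 : Fin n → ℚ) := by
    intro d c
    by_cases hc : c = d
    · exact ⟨0, by simp [hc]⟩
    obtain ⟨σ, h1, h2⟩ := exists_perm_two hab' (Ne.symm hc)
    refine ⟨(w a - w b)⁻¹ • (Pi.single (σ * Equiv.swap a b) 1 - Pi.single σ 1), ?_⟩
    funext x
    obtain ⟨y, rfl⟩ := σ.surjective x
    rw [map_smul, map_sub]
    simp only [Pi.smul_apply, Pi.sub_apply, posLin_single, mul_inv_rev, Equiv.symm_swap,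
      Equiv.Perm.mul_apply, Equiv.Perm.inv_def, Equiv.symm_apply_apply, smul_eq_mul]
    subst h1 h2
    simp only [Pi.single_apply, σ.injective.eq_iff]
    by_cases ya : y = a
    · subst ya
      simp [hab']
      field_simp
      ring
    by_cases yb : y = b
    · subst yb
      rw [Equiv.swap_apply_right]
      simp [ya]
      field_simp
    · simp [Equiv.swap_apply_of_ne_of_ne ya yb, ya, yb]
  choose P hP using basic a
  refine ⟨∑ c, r c • P c, ?_⟩
  rw [map_sum]
  simp only [map_smul, hP]
  funext x
  simp [Finset.sum_apply, mul_sub, Finset.sum_sub_distrib, hr, Pi.single_apply]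

lemma approvalHat_sum (n : ℕ) (i : Fin (n - 1)) : ∑ c, approvalHat n i c = 0 := by
  have hi := i.2
  have hn : (n : ℚ) ≠ 0 := by
    have : n ≠ 0 := by omega
    exact_mod_cast this
  simp only [approvalHat, Finset.sum_sub_distrib, Finset.sum_const, Finset.card_univ,
    Fintype.card_fin, nsmul_eq_mul]
  rw [Fin.sum_univ_eq_sum_range (fun c => if c ≤ (i : ℕ) then (1 : ℚ) else 0) n,
    Finset.sum_ite]
  have : (Finset.range n).filter (fun c => c ≤ (i : ℕ)) = Finset.range (i + 1) := by
    ext c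
    simp only [Finset.mem_filter, Finset.mem_range]
    omega
  rw [this]
  simp
  field_simp
  ring

/-- For `n ≥ 3`, any sum-zero results vectors `r_app`, `r_pos`
and any nonzero sum-zero weighting vector `w`, there are infinitely many ranked
approval profiles `(p₁, …, p_{n−1})` whose approval outcome is `r_app` and whose
positional outcome with respect to `w` is `r_pos`. -/
theorem infinite_ranked_approval_profiles (n : ℕ) (hn : 3 ≤ n)
    (rapp rpos : Fin n → ℚ) (hrapp : ∑ c, rapp c = 0) (hrpos : ∑ c, rpos c = 0)
    (w : Fin n → ℚ) (hw : w ≠ 0) (hw0 : ∑ c, w c = 0) :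
    {p : Fin (n - 1) → (Equiv.Perm (Fin n) → ℚ) |
      (∑ i : Fin (n - 1), positionalOutcome n (approvalHat n i) (p i)) = rapp ∧
      positionalOutcome n w (∑ i : Fin (n - 1), p i) = rpos}.Infinite := by
  have hex : ∃ a b, w a ≠ w b := by
    by_contra! h
    apply hw
    funext c
    have h1 : ∑ d, w d = ∑ d : Fin n, w c := Finset.sum_congr rfl fun d _ => h d c
    rw [hw0] at h1
    simp only [Finset.sum_const, Finset.card_univ, Fintype.card_fin, nsmul_eq_mul] at h1
    rcases mul_eq_zero.1 h1.symm with h2 | h2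
    · have : n = 0 := by exact_mod_cast h2
      omega
    · exact h2
  obtain ⟨a, b, hab⟩ := hex
  let i0 : Fin (n - 1) := ⟨0, by omega⟩
  let i1 : Fin (n - 1) := ⟨1, by omega⟩
  have h01 : i0 ≠ i1 := by simp [i0, i1, Fin.ext_iff]
  obtain ⟨q, hq⟩ := posLin_surj n w a b hab rpos hrpos
  obtain ⟨p1, hp1⟩ := posLin_surj n (approvalHat n i1 - approvalHat n i0)
    ⟨0, by omega⟩ ⟨1, by omega⟩ (by
      simp [approvalHat, i0, i1]
      intro h
      linarith)
    (rapp - posLin n (approvalHat n i0) q) (by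
      simp only [Pi.sub_apply, Finset.sum_sub_distrib]
      rw [hrapp, sum_posLin n _ (approvalHat_sum n i0), sub_zero])
  rw [posLin_sub] at hp1
  let F : ℚ → Fin (n - 1) → (Equiv.Perm (Fin n) → ℚ) := fun t =>
    Pi.single i0 (q - p1 + t • (fun _ => 1)) + Pi.single i1 p1
  refine Set.infinite_of_injective_forall_mem (f := F) ?_ ?_
  · intro s t hst
    have := congrFun (congrFun hst i0) 1
    simpa [F, Pi.single_apply, h01] using this
  · intro t
    constructor
    · have : ∀ i, positionalOutcome n (approvalHat n i) (F t i) =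
          (Pi.single i0 (posLin n (approvalHat n i0) (q - p1)) : Fin (n - 1) → Fin n → ℚ) i +
          (Pi.single i1 (posLin n (approvalHat n i1) p1) : Fin (n - 1) → Fin n → ℚ) i := by
        intro i
        rw [posLin_apply]
        simp only [F, Pi.add_apply, map_add]
        congr 1
        · by_cases h : i = i0
          · subst h
            simp only [Pi.single_eq_same, map_add, map_smul,
              posLin_const n _ (approvalHat_sum n _), smul_zero, add_zero]
          · simp [Pi.single_eq_of_ne h]
        · by_cases h : i = i1
          · subst h
            simp only [Pi.single_eq_same]
          · simp [Pi.single_eq_of_ne h]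
      rw [Finset.sum_congr rfl fun i _ => this i, Finset.sum_add_distrib,
        Finset.sum_pi_single', Finset.sum_pi_single']
      simp only [Finset.mem_univ, if_true, map_sub]
      have h2 := eq_add_of_sub_eq hp1
      rw [h2]
      abel
    · have : ∑ i, F t i = q + t • (fun _ => 1) := by
        simp only [F, Pi.add_apply, Finset.sum_add_distrib]
        simp only [Finset.sum_pi_single', Finset.mem_univ, if_true]
        abel
      rw [this, posLin_apply, map_add, map_smul, posLin_const n w hw0, hq, smul_zero, add_zero]
end

section
/- Let n ≥ 2 and let w, x : Fin n → ℚ be weighting vectors. The ordinal rankings of T_w(p) and T_x(p) agree for every full-ranking profile p — that is, for every p : Equiv.Perm (Fin n) → ℚ and all candidates c, d one has T_w(p)(c) ≤ T_w(p)(d) if and only if T_x(p)(c) ≤ T_x(p)(d) — if and only if w ∼ x, i.e., there exist rationals α > 0 and β with x = α·w + β·𝟙. -/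
theorem aux_perm {n : ℕ} {c d i j : Fin n} (hcd : c ≠ d) (hij : i ≠ j) :
    ∃ σ : Equiv.Perm (Fin n), σ⁻¹ c = i ∧ σ⁻¹ d = j := by
  refine ⟨(Equiv.swap (Equiv.swap c i d) j * Equiv.swap c i)⁻¹, ?_, ?_⟩
  · rw [inv_inv, Equiv.Perm.mul_apply, Equiv.swap_apply_left]
    apply Equiv.swap_apply_of_ne_of_ne _ hij
    intro h
    apply hcd
    apply (Equiv.swap c i).injective
    rw [Equiv.swap_apply_left]
    exact h
  · rw [inv_inv, Equiv.Perm.mul_apply, Equiv.swap_apply_left]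

theorem aux_outcome {n : ℕ} (w : Fin n → ℚ) (σ τ : Equiv.Perm (Fin n)) (A B : ℚ) (c : Fin n) :
    positionalOutcome n w (Pi.single σ A + Pi.single τ B) c
      = A * w (σ⁻¹ c) + B * w (τ⁻¹ c) := by
  simp only [positionalOutcome, Pi.add_apply, add_mul, Finset.sum_add_distrib, Pi.single_apply,
    ite_mul, zero_mul, Finset.sum_ite_eq', Finset.sum_ite_eq, Finset.mem_univ, if_true]

/-- For `n ≥ 2`, the ordinal rankings of `T_w(p)` and `T_x(p)`
agree for every full-ranking profile `p` if and only if `w ∼ x`, i.e. there are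
rationals `α > 0` and `β` with `x = α·w + β·𝟙`. -/
theorem ordinal_rankings_agree_iff_equivalent (n : ℕ) (hn : 2 ≤ n)
    (w x : Fin n → ℚ) :
    (∀ p : Equiv.Perm (Fin n) → ℚ, ∀ c d : Fin n,
        positionalOutcome n w p c ≤ positionalOutcome n w p d ↔
        positionalOutcome n x p c ≤ positionalOutcome n x p d) ↔
    (∃ α β : ℚ, 0 < α ∧ x = fun c => α * w c + β) := by
  constructor
  · intro H
    have key : ∀ i j k l : Fin n, i ≠ j → k ≠ l → ∀ A B : ℚ,
        (A * w i + B * w k ≤ A * w j + B * w l ↔ A * x i + B * x k ≤ A * x j + B * x l) := by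
      intro i j k l hij hkl A B
      have hcd : (⟨0, by omega⟩ : Fin n) ≠ ⟨1, by omega⟩ := by simp
      obtain ⟨σ, h1, h2⟩ := aux_perm hcd hij
      obtain ⟨τ, h3, h4⟩ := aux_perm hcd hkl
      have := H (Pi.single σ A + Pi.single τ B) ⟨0, by omega⟩ ⟨1, by omega⟩
      simpa only [aux_outcome, h1, h2, h3, h4] using this
    by_cases hw : ∃ i j, w j < w i
    · obtain ⟨i, j, hlt⟩ := hw
      have hij : i ≠ j := by rintro rfl; exact lt_irrefl _ hlt
      have hx : x j < x i := by
        have := key i j i j hij hij 1 0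
        simp only [one_mul, zero_mul, add_zero] at this
        exact not_le.mp fun h => not_le.mpr hlt (this.mpr h)
      have hd : w i - w j ≠ 0 := (sub_pos.mpr hlt).ne'
      refine ⟨(x i - x j) / (w i - w j), x j - (x i - x j) / (w i - w j) * w j,
        div_pos (sub_pos.mpr hx) (sub_pos.mpr hlt), ?_⟩
      funext k
      have e : (w k - w j) * (x i - x j) = (w i - w j) * (x k - x j) := by
        by_cases hk : k = j
        · subst hk; ring
        · have h1 := (key i j k j hij hk (-(w k - w j)) (w i - w j)).mp (by linarith)
          have h2 := (key i j k j hij hk (w k - w j) (-(w i - w j))).mp (by linarith)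
          linarith
      field_simp
      linarith
    · push Not at hw
      refine ⟨1, x ⟨0, by omega⟩ - w ⟨0, by omega⟩, one_pos, ?_⟩
      have hc : ∀ i j, i ≠ j → x i ≤ x j := by
        intro i j hij
        have := key i j i j hij hij 1 0
        simp only [one_mul, zero_mul, add_zero] at this
        exact this.mp (hw i j)
      funext k
      by_cases hk : k = ⟨0, by omega⟩
      · rw [← hk]; ring
      · linarith [hc _ _ hk, hc _ _ (Ne.symm hk), hw k ⟨0, by omega⟩, hw ⟨0, by omega⟩ k]
  · rintro ⟨α, β, hα, rfl⟩ p c d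
    have e : ∀ c, positionalOutcome n (fun c => α * w c + β) p c
        = α * positionalOutcome n w p c + β * ∑ σ, p σ := by
      intro c
      simp only [positionalOutcome, Finset.mul_sum, ← Finset.sum_add_distrib]
      exact Finset.sum_congr rfl fun _ _ => by ring
    rw [e, e, add_le_add_iff_right, mul_le_mul_iff_right₀ hα]
end

section
/- Let n ≥ 2 and let w, x : Fin n → ℚ be nonzero sum-zero weighting vectors. Then the kernels of the linear maps T_w and T_x (as ℚ-linear maps from the space of full-ranking profiles to Fin n → ℚ) are equal if and only if there exists a nonzero rational γ with x = γ·w. (Since the effective space E(w) is the orthogonal complement of ker T_w, this is exactly the statement that E(w) = E(x) if and only if w ∼ x or w ∼ −x.) -/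
/-- The positional voting map `T_w` as a `ℚ`-linear map from the space of
full-ranking profiles to results vectors: `T_w(p)(c) = Σ_σ p(σ) · w(σ⁻¹ c)`. -/
noncomputable def positionalMap (n : ℕ) (w : Fin n → ℚ) :
    (Equiv.Perm (Fin n) → ℚ) →ₗ[ℚ] (Fin n → ℚ) where
  toFun p := fun c => ∑ σ : Equiv.Perm (Fin n), p σ * w (σ⁻¹ c)
  map_add' p q := by
    funext c
    simp [add_mul, Finset.sum_add_distrib]
  map_smul' a p := by
    funext c
    simp [Finset.mul_sum, mul_assoc]

theorem key_aux (n : ℕ) (i j a b : Fin n) (hab : a ≠ b) :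
    ∃ q : Equiv.Perm (Fin n) → ℚ, ∀ w : Fin n → ℚ,
      positionalMap n w q = (w i - w j) • (Pi.single a 1 - Pi.single b 1 : Fin n → ℚ) := by
  by_cases hij : i = j
  · refine ⟨0, fun w => ?_⟩
    simp [hij]
  obtain ⟨s, hi, hj⟩ : ∃ s : Equiv.Perm (Fin n), s i = a ∧ s j = b := by
    refine ⟨Equiv.swap (Equiv.swap i a j) b * Equiv.swap i a, ?_, ?_⟩
    · rw [Equiv.Perm.mul_apply, Equiv.swap_apply_left]
      refine Equiv.swap_apply_of_ne_of_ne ?_ hab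
      intro h
      apply hij
      apply (Equiv.swap i a).injective
      rw [Equiv.swap_apply_left]
      exact h
    · rw [Equiv.Perm.mul_apply, Equiv.swap_apply_left]
  refine ⟨Pi.single s 1 - Pi.single (s * Equiv.swap i j) 1, fun w => ?_⟩
  have h1 : ∀ t : Equiv.Perm (Fin n),
      positionalMap n w (Pi.single t 1) = fun c => w (t⁻¹ c) := by
    intro t
    funext c
    simp [positionalMap, Pi.single_apply]
  rw [map_sub, h1, h1]
  funext c
  obtain ⟨k, rfl⟩ := s.surjective c
  subst hi hj
  by_cases hki : k = i
  · subst hki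
    simp [Pi.single_apply, hij]
  by_cases hkj : k = j
  · subst hkj
    simp [Pi.single_apply, hki]
  simp [Pi.single_apply, hki, hkj, Equiv.swap_apply_of_ne_of_ne]

/-- For `n ≥ 2` and nonzero sum-zero weighting vectors `w, x`,
the kernels of `T_w` and `T_x` coincide if and only if `x` is a nonzero rational
multiple of `w` (equivalently, `E(w) = E(x)` iff `w ∼ x` or `w ∼ −x`). -/
theorem ker_eq_iff_scalar_multiple (n : ℕ) (hn : 2 ≤ n)
    (w x : Fin n → ℚ) (hw : w ≠ 0) (hx : x ≠ 0)
    (hw0 : ∑ c, w c = 0) (hx0 : ∑ c, x c = 0) :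
    LinearMap.ker (positionalMap n w) = LinearMap.ker (positionalMap n x) ↔
      ∃ γ : ℚ, γ ≠ 0 ∧ x = γ • w := by
  constructor
  · intro h
    have hn0 : (n : ℚ) ≠ 0 := by
      have : n ≠ 0 := by omega
      exact_mod_cast this
    obtain ⟨i₀, j₀, hne⟩ : ∃ i j, w i - w j ≠ 0 := by
      by_contra! hc
      apply hw
      funext i
      have h2 : ∑ j, (w i - w j) = 0 := Finset.sum_eq_zero fun j _ => hc i j
      rw [Finset.sum_sub_distrib, hw0] at h2
      simp at h2
      rcases h2 with h2 | h2
      · omega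
      · simpa using h2
    have hab : (⟨0, by omega⟩ : Fin n) ≠ ⟨1, by omega⟩ := by simp
    have key : ∀ i j, (w i₀ - w j₀) * (x i - x j) = (x i₀ - x j₀) * (w i - w j) := by
      intro i j
      obtain ⟨q, hq⟩ := key_aux n i j _ _ hab
      obtain ⟨r, hr⟩ := key_aux n i₀ j₀ _ _ hab
      have hm : (w i₀ - w j₀) • q - (w i - w j) • r ∈ LinearMap.ker (positionalMap n w) := by
        rw [LinearMap.mem_ker, map_sub, map_smul, map_smul, hq, hr, smul_smul, smul_smul,
          mul_comm, sub_self]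
      rw [h, LinearMap.mem_ker, map_sub, map_smul, map_smul, hq, hr, smul_smul, smul_smul] at hm
      have := congrFun hm ⟨0, by omega⟩
      simp [Pi.single_apply] at this
      linarith
    have key2 : ∀ i, (w i₀ - w j₀) * x i = (x i₀ - x j₀) * w i := by
      intro i
      have h2 : ∑ j, (w i₀ - w j₀) * (x i - x j) = ∑ j, (x i₀ - x j₀) * (w i - w j) :=
        Finset.sum_congr rfl fun j _ => key i j
      rw [← Finset.mul_sum, ← Finset.mul_sum, Finset.sum_sub_distrib, Finset.sum_sub_distrib,
        hw0, hx0] at h2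
      simp only [Finset.sum_const, Finset.card_univ, Fintype.card_fin, nsmul_eq_mul, sub_zero] at h2
      apply mul_left_cancel₀ hn0
      linarith
    have hxe : x = ((x i₀ - x j₀) / (w i₀ - w j₀)) • w := by
      funext i
      have := key2 i
      simp only [Pi.smul_apply, smul_eq_mul]
      field_simp
      linarith
    refine ⟨_, ?_, hxe⟩
    intro h0
    rw [h0, zero_smul] at hxe
    exact hx hxe
  · rintro ⟨γ, hγ, rfl⟩
    have h1 : positionalMap n (γ • w) = γ • positionalMap n w := by
      ext p c
      simp [positionalMap, Finset.mul_sum, mul_left_comm]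
    rw [h1, LinearMap.ker_smul _ _ hγ]
end

section
/- Let n ≥ 2 and let w, x : Fin n → ℚ be nonzero sum-zero weighting vectors that are not scalar multiples of one another (there is no rational γ with x = γ·w). Then the effective spaces of T_w and T_x intersect trivially: the ℚ-submodule of the profile space Equiv.Perm (Fin n) → ℚ spanned by the row functions {σ ↦ w(σ⁻¹(c)) : c ∈ Fin n} meets the submodule spanned by {σ ↦ x(σ⁻¹(c)) : c ∈ Fin n} only in the zero function. -/
theorem esit_reindex (n : ℕ) (a w : Fin n → ℚ) (σ : Equiv.Perm (Fin n)) :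
    ∑ c, a c * w (σ⁻¹ c) = ∑ k, a (σ k) * w k := by
  rw [← Equiv.sum_comp σ]
  simp

theorem esit_swap (n : ℕ) (a w : Fin n → ℚ) (σ : Equiv.Perm (Fin n)) (i j : Fin n) (hij : i ≠ j) :
    ∑ c, a c * w (σ⁻¹ c) - ∑ c, a c * w ((σ * Equiv.swap i j)⁻¹ c)
      = (a (σ i) - a (σ j)) * (w i - w j) := by
  rw [esit_reindex, esit_reindex, ← Finset.sum_sub_distrib]
  rw [Finset.sum_eq_add i j hij]
  · simp
    ring
  · intro k _ hk
    simp [Equiv.swap_apply_of_ne_of_ne hk.1 hk.2]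
  · simp
  · simp

theorem esit_key (n : ℕ) (a b w x : Fin n → ℚ)
    (h : ∀ σ : Equiv.Perm (Fin n), ∑ c, a c * w (σ⁻¹ c) = ∑ c, b c * x (σ⁻¹ c))
    (i j c d : Fin n) (hcd : c ≠ d) :
    (a c - a d) * (w i - w j) = (b c - b d) * (x i - x j) := by
  by_cases hij : i = j
  · simp [hij]
  have hc : c ≠ Equiv.swap i c j := by
    intro e
    apply hij
    apply (Equiv.swap i c).injective
    rw [← e, Equiv.swap_apply_left]
  have h1 := esit_swap n a w (Equiv.swap (Equiv.swap i c j) d * Equiv.swap i c) i j hij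
  have h2 := esit_swap n b x (Equiv.swap (Equiv.swap i c j) d * Equiv.swap i c) i j hij
  rw [h, h, h2] at h1
  simp only [Equiv.Perm.mul_apply, Equiv.swap_apply_left,
    Equiv.swap_apply_of_ne_of_ne hc hcd] at h1
  exact h1.symm

/-- For `n ≥ 2` and nonzero sum-zero weighting vectors `w, x`
that are not scalar multiples of one another, the effective spaces of `T_w` and
`T_x` — i.e. the spans of the row functions `σ ↦ w(σ⁻¹ c)` resp. `σ ↦ x(σ⁻¹ c)`
in the profile space — intersect only in the zero function. -/
theorem effective_spaces_intersect_trivially (n : ℕ) (hn : 2 ≤ n)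
    (w x : Fin n → ℚ) (hw : w ≠ 0) (hx : x ≠ 0)
    (hw0 : ∑ c, w c = 0) (hx0 : ∑ c, x c = 0)
    (hind : ¬ ∃ γ : ℚ, x = γ • w) :
    Submodule.span ℚ
        (Set.range fun c : Fin n => fun σ : Equiv.Perm (Fin n) => w (σ⁻¹ c)) ⊓
      Submodule.span ℚ
        (Set.range fun c : Fin n => fun σ : Equiv.Perm (Fin n) => x (σ⁻¹ c)) = ⊥ := by
  rw [Submodule.eq_bot_iff]
  rintro f ⟨hf1, hf2⟩
  obtain ⟨a, ha⟩ := (Submodule.mem_span_range_iff_exists_fun ℚ).1 hf1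
  obtain ⟨b, hb⟩ := (Submodule.mem_span_range_iff_exists_fun ℚ).1 hf2
  have ha' : ∀ σ, ∑ c, a c * w (σ⁻¹ c) = f σ := fun σ => by
    simpa [Finset.sum_apply] using congrFun ha σ
  have hb' : ∀ σ, ∑ c, b c * x (σ⁻¹ c) = f σ := fun σ => by
    simpa [Finset.sum_apply] using congrFun hb σ
  by_cases hconst : ∀ c d, a c = a d
  · funext σ
    rw [← ha', esit_reindex]
    have : ∀ k, a (σ k) * w k = a ⟨0, by omega⟩ * w k := fun k => by
      rw [hconst (σ k) ⟨0, by omega⟩]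
    simp only [this, ← Finset.mul_sum, hw0, mul_zero, Pi.zero_apply]
  · exfalso
    push Not at hconst
    obtain ⟨c, d, hacd⟩ := hconst
    have hcd : c ≠ d := fun e => hacd (by rw [e])
    have key := fun i j => esit_key n a b w x (fun σ => by rw [ha', hb']) i j c d hcd
    have hn0 : (n : ℚ) ≠ 0 := by
      have : n ≠ 0 := by omega
      exact_mod_cast this
    have hprop : ∀ i, (a c - a d) * w i = (b c - b d) * x i := by
      intro i
      have hs := Finset.sum_congr (rfl : (Finset.univ : Finset (Fin n)) = _) (fun j _ => key i j)
      simp only [← Finset.mul_sum, Finset.sum_sub_distrib, hw0, hx0, Finset.sum_const,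
        Finset.card_univ, Fintype.card_fin, nsmul_eq_mul, sub_zero] at hs
      apply mul_left_cancel₀ hn0
      linarith
    have hA : a c - a d ≠ 0 := sub_ne_zero.2 hacd
    by_cases hB : b c - b d = 0
    · apply hw
      funext i
      have := hprop i
      rw [hB, zero_mul] at this
      simpa [hA] using this
    · apply hind
      refine ⟨(a c - a d) / (b c - b d), ?_⟩
      funext i
      rw [Pi.smul_apply, smul_eq_mul, div_mul_eq_mul_div, hprop i]
      field_simp
end

section
/- Let n ≥ 2, let w, x : Fin n → ℚ be weighting vectors with x sum-zero, and let c, d ∈ Fin n with c ≠ d. Then Σ_{σ ∈ Equiv.Perm (Fin n)} w(σ⁻¹(c))·x(σ⁻¹(d)) = −(n−2)!·(Σ_{i} w(i)·x(i)). In other words, the dot product of the rows r_c(w) and r_d(x) equals −(n−2)! times the dot product of w and x. -/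
/-- For `n ≥ 2`, weighting vectors `w, x : Fin n → ℚ` with `x`
sum-zero, and distinct candidates `c ≠ d`, the dot product of the rows `r_c(w)`
and `r_d(x)` equals `−(n−2)!` times the dot product of `w` and `x`. -/
theorem row_dot_row_distinct_candidates (n : ℕ) (hn : 2 ≤ n)
    (w x : Fin n → ℚ) (hx0 : ∑ i, x i = 0)
    (c d : Fin n) (hcd : c ≠ d) :
    ∑ σ : Equiv.Perm (Fin n), w (σ⁻¹ c) * x (σ⁻¹ d) =
      -((n - 2).factorial : ℚ) * ∑ i, w i * x i := by
  have inv : ∀ (τ : Equiv.Perm (Fin n)) (a b : Fin n),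
      ∑ σ : Equiv.Perm (Fin n), w (σ⁻¹ (τ a)) * x (σ⁻¹ (τ b)) =
      ∑ σ : Equiv.Perm (Fin n), w (σ⁻¹ a) * x (σ⁻¹ b) := by
    intro τ a b
    refine Fintype.sum_equiv (Equiv.mulLeft τ⁻¹) _ _ fun σ => ?_
    simp [mul_inv_rev, Equiv.Perm.mul_apply]
  have hoff : ∀ e, e ≠ c → ∑ σ : Equiv.Perm (Fin n), w (σ⁻¹ c) * x (σ⁻¹ e) =
      ∑ σ : Equiv.Perm (Fin n), w (σ⁻¹ c) * x (σ⁻¹ d) := by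
    intro e he
    have h := inv (Equiv.swap d e) c d
    rwa [Equiv.swap_apply_of_ne_of_ne hcd he.symm, Equiv.swap_apply_left] at h
  have hdiag : ∀ e, ∑ σ : Equiv.Perm (Fin n), w (σ⁻¹ e) * x (σ⁻¹ e) =
      ∑ σ : Equiv.Perm (Fin n), w (σ⁻¹ c) * x (σ⁻¹ c) := by
    intro e
    have h := inv (Equiv.swap c e) c c
    rwa [Equiv.swap_apply_left] at h
  have h1 : ∑ e, ∑ σ : Equiv.Perm (Fin n), w (σ⁻¹ c) * x (σ⁻¹ e) = 0 := by
    rw [Finset.sum_comm]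
    refine Finset.sum_eq_zero fun σ _ => ?_
    rw [← Finset.mul_sum, Equiv.sum_comp σ⁻¹ x, hx0, mul_zero]
  have h2 : ∑ e, ∑ σ : Equiv.Perm (Fin n), w (σ⁻¹ e) * x (σ⁻¹ e) =
      (n.factorial : ℚ) * ∑ i, w i * x i := by
    rw [Finset.sum_comm]
    rw [Finset.sum_congr rfl fun σ _ => Equiv.sum_comp σ⁻¹ (fun i => w i * x i)]
    simp [Fintype.card_perm]
  rw [Finset.sum_congr rfl fun e _ => hdiag e] at h2
  rw [← Finset.add_sum_erase _ _ (Finset.mem_univ c),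
    Finset.sum_congr rfl fun e he => hoff e (Finset.ne_of_mem_erase he)] at h1
  simp only [Finset.sum_const, Finset.card_erase_of_mem (Finset.mem_univ c),
    Finset.card_univ, Fintype.card_fin, nsmul_eq_mul] at h1 h2
  generalize (∑ σ : Equiv.Perm (Fin n), w (σ⁻¹ c) * x (σ⁻¹ d)) = S at *
  generalize (∑ σ : Equiv.Perm (Fin n), w (σ⁻¹ c) * x (σ⁻¹ c)) = D at *
  generalize (∑ i, w i * x i) = P at *
  obtain ⟨m, rfl⟩ := Nat.exists_eq_add_of_le' hn
  simp only [Nat.add_sub_cancel, Nat.factorial_succ, show m + 2 - 1 = m + 1 by omega] at h1 h2 ⊢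
  push_cast at h1 h2 ⊢
  have hm1 : (m : ℚ) + 1 ≠ 0 := by positivity
  have hm2 : (m : ℚ) + 2 ≠ 0 := by positivity
  apply mul_left_cancel₀ (mul_ne_zero hm2 hm1)
  linear_combination (m + 2 : ℚ) * h1 - h2
end

section
/- Let n ≥ 2 and let w, x : Fin n → ℚ be nonzero sum-zero weighting vectors. Then the effective spaces of T_w and T_x are orthogonal if and only if w and x are orthogonal; concretely: (∀ c d ∈ Fin n, Σ_{σ ∈ Equiv.Perm (Fin n)} w(σ⁻¹(c))·x(σ⁻¹(d)) = 0) if and only if Σ_i w(i)·x(i) = 0. -/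
theorem S_inv_aux (n : ℕ) (w x : Fin n → ℚ) (τ : Equiv.Perm (Fin n)) (c d : Fin n) :
    ∑ σ : Equiv.Perm (Fin n), w (σ⁻¹ (τ c)) * x (σ⁻¹ (τ d)) =
    ∑ σ : Equiv.Perm (Fin n), w (σ⁻¹ c) * x (σ⁻¹ d) := by
  refine Fintype.sum_equiv (Equiv.mulLeft τ⁻¹) _ _ ?_
  intro σ
  simp [mul_inv_rev, Equiv.Perm.mul_apply]

theorem S_diag_aux (n : ℕ) (w x : Fin n → ℚ) :
    ∑ c, ∑ σ : Equiv.Perm (Fin n), w (σ⁻¹ c) * x (σ⁻¹ c) =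
    (Fintype.card (Equiv.Perm (Fin n)) : ℚ) * ∑ i, w i * x i := by
  rw [Finset.sum_comm]
  have h : ∀ σ : Equiv.Perm (Fin n), ∑ c, w (σ⁻¹ c) * x (σ⁻¹ c) = ∑ i, w i * x i :=
    fun σ => Equiv.sum_comp σ⁻¹ (fun i => w i * x i)
  simp only [h, Finset.sum_const, Finset.card_univ, nsmul_eq_mul]

theorem S_row_aux (n : ℕ) (w x : Fin n → ℚ) (hx0 : ∑ i, x i = 0) (c : Fin n) :
    ∑ d, ∑ σ : Equiv.Perm (Fin n), w (σ⁻¹ c) * x (σ⁻¹ d) = 0 := by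
  rw [Finset.sum_comm]
  refine Finset.sum_eq_zero fun σ _ => ?_
  rw [← Finset.mul_sum, Equiv.sum_comp σ⁻¹ x, hx0, mul_zero]

/-- For `n ≥ 2` and nonzero sum-zero weighting vectors `w, x`,
the effective spaces of `T_w` and `T_x` are orthogonal (all pairwise dot
products of row functions vanish) if and only if `w` and `x` are orthogonal. -/
theorem effective_spaces_orthogonal_iff (n : ℕ) (hn : 2 ≤ n)
    (w x : Fin n → ℚ) (hw : w ≠ 0) (hx : x ≠ 0)
    (hw0 : ∑ i, w i = 0) (hx0 : ∑ i, x i = 0) :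
    (∀ c d : Fin n, ∑ σ : Equiv.Perm (Fin n), w (σ⁻¹ c) * x (σ⁻¹ d) = 0) ↔
      ∑ i, w i * x i = 0 := by
  have hdiag := S_diag_aux n w x
  have hinv := S_inv_aux n w x
  have hrow := S_row_aux n w x hx0
  constructor
  · intro h
    simp only [h, Finset.sum_const_zero] at hdiag
    rcases mul_eq_zero.1 hdiag.symm with h1 | h1
    · exact absurd h1 (Nat.cast_ne_zero.2 Fintype.card_ne_zero)
    · exact h1
  · intro h
    rw [h, mul_zero] at hdiag
    generalize hS : (fun c d : Fin n =>
      ∑ σ : Equiv.Perm (Fin n), w (σ⁻¹ c) * x (σ⁻¹ d)) = S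
    have e : ∀ c d, ∑ σ : Equiv.Perm (Fin n), w (σ⁻¹ c) * x (σ⁻¹ d) = S c d :=
      fun c d => by rw [← hS]
    simp only [e] at hdiag hinv hrow ⊢
    have hd : ∀ c, S c c = 0 := by
      intro c
      have h1 : ∀ b, S b b = S c c := fun b => by
        have := hinv (Equiv.swap c b) c c
        rwa [Equiv.swap_apply_left] at this
      simp only [h1, Finset.sum_const, Finset.card_univ, Fintype.card_fin, nsmul_eq_mul] at hdiag
      rcases mul_eq_zero.1 hdiag with h2 | h2
      · exact absurd h2 (Nat.cast_ne_zero.2 (by omega))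
      · exact h2
    intro c d
    by_cases hcd : c = d
    · rw [← hcd]; exact hd c
    have h1 : ∀ b ∈ Finset.univ.erase c, S c b = S c d := fun b hb => by
      have hb' := Finset.ne_of_mem_erase hb
      have := hinv (Equiv.swap d b) c d
      rwa [Equiv.swap_apply_left, Equiv.swap_apply_of_ne_of_ne hcd hb'.symm] at this
    have h2 := hrow c
    rw [← Finset.add_sum_erase _ _ (Finset.mem_univ c), hd c, zero_add,
      Finset.sum_congr rfl h1, Finset.sum_const, nsmul_eq_mul] at h2
    rcases mul_eq_zero.1 h2 with h3 | h3
    · exfalso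
      have h4 : (Finset.univ.erase c).card = 0 := by exact_mod_cast h3
      rw [Finset.card_erase_of_mem (Finset.mem_univ c), Finset.card_univ, Fintype.card_fin] at h4
      omega
    · exact h3
end

section
/- Let n ≥ 2 and let b : Fin n → ℚ be the Borda weighting vector b(j) = n − 1 − j. Then the Borda count is recoverable from the pairs map by summing victories: for every full-ranking profile p : Equiv.Perm (Fin n) → ℚ and every candidate c, T_b(p)(c) = Σ_{d ≠ c} P(p)(c, d). -/
/-- For `n ≥ 2` and the Borda weighting vector
`b(j) = n − 1 − j`, the Borda outcome of every full-ranking profile `p` is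
recovered from the pairs map by summing victories:
`T_b(p)(c) = Σ_{d ≠ c} P(p)(c, d)`. -/
theorem borda_recoverable_from_pairs (n : ℕ) (hn : 2 ≤ n)
    (p : Equiv.Perm (Fin n) → ℚ) (c : Fin n) :
    ∑ σ : Equiv.Perm (Fin n), p σ * ((n : ℚ) - 1 - ((σ⁻¹ c : Fin n) : ℕ)) =
      ∑ d ∈ Finset.univ.filter (fun d : Fin n => d ≠ c),
        ∑ σ ∈ Finset.univ.filter (fun σ : Equiv.Perm (Fin n) => σ⁻¹ c < σ⁻¹ d), p σ := by
  have h1 : ∀ d ∈ (Finset.univ : Finset (Fin n)),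
      d ∉ Finset.univ.filter (fun d : Fin n => d ≠ c) →
      ∑ σ ∈ Finset.univ.filter (fun σ : Equiv.Perm (Fin n) => σ⁻¹ c < σ⁻¹ d), p σ = 0 := by
    intro d _ hd
    have hdc : d = c := by simpa using hd
    subst hdc
    simp
  rw [Finset.sum_subset (Finset.subset_univ _) h1]
  simp_rw [Finset.sum_filter]
  rw [Finset.sum_comm]
  refine Finset.sum_congr rfl fun σ _ => ?_
  rw [Equiv.sum_comp σ⁻¹ (fun e : Fin n => if σ⁻¹ c < e then p σ else 0)]
  rw [← Finset.sum_filter, Finset.sum_const, nsmul_eq_mul, mul_comm]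
  congr 1
  generalize σ⁻¹ c = k
  have h2 : (Finset.univ.filter (fun e : Fin n => k < e)) = Finset.Ioi k := by
    ext e; simp
  have hk := k.isLt
  rw [h2, Fin.card_Ioi, Nat.sub_sub, Nat.cast_sub (by omega)]
  push_cast
  ring
end

section
/- Let n ≥ 2 and let U be the ℚ-subspace of Fin n → ℚ consisting of sum-zero vectors. For every ℚ-linear map T : U → U there exists an element a : Equiv.Perm (Fin n) → ℚ of the rational group algebra of S_n such that for every u ∈ U and every c ∈ Fin n, (T u)(c) = Σ_{σ ∈ Equiv.Perm (Fin n)} a(σ)·u(σ⁻¹(c)). (This is the instance, for the simple module S^{(n−1,1)}, of Burnside's theorem that every linear endomorphism of a simple ℚS_n-module is realized by the action of some element of ℚS_n.) -/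
lemma cnt_const {n : ℕ} (p q c d : Fin n) :
    (∑ τ : Equiv.Perm (Fin n), if τ c = d then (1:ℚ) else 0) =
      ∑ τ : Equiv.Perm (Fin n), if τ p = q then (1:ℚ) else 0 := by
  refine Fintype.sum_equiv ((Equiv.mulLeft (Equiv.swap q d)).trans
    (Equiv.mulRight (Equiv.swap p c))) _ _ fun τ => ?_
  have : ((Equiv.swap q d * τ * Equiv.swap p c) p = q) ↔ τ c = d := by
    simp only [Equiv.Perm.mul_apply, Equiv.swap_apply_left]
    rw [Equiv.swap_apply_eq_iff, Equiv.swap_apply_left]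
  simp only [Equiv.trans_apply, Equiv.coe_mulLeft, Equiv.coe_mulRight, this]

lemma F_diag {n : ℕ} (u : Fin n → ℚ) (c d : Fin n) :
    (∑ τ : Equiv.Perm (Fin n), if τ c = d then u (τ c) else 0) =
      (∑ τ : Equiv.Perm (Fin n), if τ c = d then (1:ℚ) else 0) * u d := by
  rw [Finset.sum_mul]
  refine Finset.sum_congr rfl fun τ _ => ?_
  split_ifs with h <;> simp [h]

lemma F_const {n : ℕ} (u : Fin n → ℚ) (c d x y : Fin n) (hx : x ≠ c) (hy : y ≠ c) :
    (∑ τ : Equiv.Perm (Fin n), if τ c = d then u (τ x) else 0) =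
      ∑ τ : Equiv.Perm (Fin n), if τ c = d then u (τ y) else 0 := by
  refine Fintype.sum_equiv (Equiv.mulRight (Equiv.swap x y)) _ _ fun τ => ?_
  simp [Equiv.Perm.mul_apply, Equiv.swap_apply_of_ne_of_ne hx.symm hy.symm]

lemma F_off {n : ℕ} (u : Fin n → ℚ) (hu : ∑ c, u c = 0) (c d x : Fin n) (hx : x ≠ c) :
    ((n:ℚ) - 1) * (∑ τ : Equiv.Perm (Fin n), if τ c = d then u (τ x) else 0) =
      - ((∑ τ : Equiv.Perm (Fin n), if τ c = d then (1:ℚ) else 0) * u d) := by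
  have h0 : ∑ y, (∑ τ : Equiv.Perm (Fin n), if τ c = d then u (τ y) else 0) = 0 := by
    rw [Finset.sum_comm]
    refine Finset.sum_eq_zero fun τ _ => ?_
    split_ifs
    · rw [Equiv.sum_comp τ u, hu]
    · simp
  rw [← Finset.add_sum_erase _ _ (Finset.mem_univ c), F_diag] at h0
  rw [Finset.sum_congr rfl (fun y hy => F_const u c d y x (Finset.ne_of_mem_erase hy) hx)] at h0
  rw [Finset.sum_const, Finset.card_erase_of_mem (Finset.mem_univ c), Finset.card_univ,
    Fintype.card_fin, nsmul_eq_mul, Nat.cast_sub (by have := c.pos; omega)] at h0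
  push_cast at h0
  linarith

/-- Burnside's theorem for the simple module `S^{(n−1,1)}`.
For `n ≥ 2`, every `ℚ`-linear endomorphism of the subspace `U` of sum-zero
vectors in `Fin n → ℚ` is realized by the action of some element
`a : Equiv.Perm (Fin n) → ℚ` of the group algebra `ℚS_n`. -/
theorem endomorphism_realized_by_group_algebra (n : ℕ) (hn : 2 ≤ n)
    (U : Submodule ℚ (Fin n → ℚ)) (hU : ∀ v, v ∈ U ↔ ∑ c, v c = 0)
    (T : U →ₗ[ℚ] U) :
    ∃ a : Equiv.Perm (Fin n) → ℚ, ∀ u : U, ∀ c : Fin n,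
      (T u : Fin n → ℚ) c =
        ∑ σ : Equiv.Perm (Fin n), a σ * (u : Fin n → ℚ) (σ⁻¹ c) := by
  obtain ⟨T', hT'⟩ := LinearMap.exists_extend T
  let M : Fin n → Fin n → ℚ := fun c d => (T' (Pi.single d 1) : Fin n → ℚ) c
  have hM : ∀ u : U, ∀ c, (T u : Fin n → ℚ) c = ∑ d, M c d * (u : Fin n → ℚ) d := by
    intro u c
    have h1 : T u = T' u := by rw [← hT']; rfl
    have h2 : T' (u : Fin n → ℚ) = ∑ d, (u : Fin n → ℚ) d • T' (Pi.single d 1) := by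
      conv_lhs => rw [pi_eq_sum_univ' (u : Fin n → ℚ)]
      rw [map_sum]
      refine Finset.sum_congr rfl fun d _ => ?_
      rw [map_smul]
    rw [h1, h2]
    simp [M, Finset.sum_apply, mul_comm]
  let z : Fin n := ⟨0, by omega⟩
  obtain ⟨N, hNdef⟩ : ∃ N : ℚ, N = ∑ τ : Equiv.Perm (Fin n), if τ z = z then (1:ℚ) else 0 :=
    ⟨_, rfl⟩
  have hN : 0 < N := by
    rw [hNdef]
    refine Finset.sum_pos' (fun τ _ => by split_ifs <;> simp) ⟨1, Finset.mem_univ _, by simp⟩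
  have hn1 : (0:ℚ) < (n:ℚ) - 1 := by
    have : (2:ℚ) ≤ n := by exact_mod_cast hn
    linarith
  have hn0 : (0:ℚ) < n := by linarith
  refine ⟨fun σ => (((n:ℚ) - 1) / (N * n)) * ∑ c', M c' (σ⁻¹ c'), fun u c => ?_⟩
  have hu := (hU u).1 u.2
  have hTu := (hU (T u)).1 (T u).2
  have key : ∑ σ : Equiv.Perm (Fin n), (∑ c', M c' (σ⁻¹ c')) * (u : Fin n → ℚ) (σ⁻¹ c)
      = ∑ c', ∑ d, M c' d * ∑ τ : Equiv.Perm (Fin n),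
          if τ c' = d then (u : Fin n → ℚ) (τ c) else 0 := by
    refine (Equiv.sum_comp (Equiv.inv (Equiv.Perm (Fin n)))
      (fun τ : Equiv.Perm (Fin n) => (∑ c', M c' (τ c')) * (u : Fin n → ℚ) (τ c))).trans ?_
    simp_rw [Finset.sum_mul, Finset.mul_sum]
    rw [Finset.sum_comm]
    refine Finset.sum_congr rfl fun c' _ => ?_
    rw [Finset.sum_comm]
    refine Finset.sum_congr rfl fun τ _ => ?_
    simp
  have inner : ∀ c', ((n:ℚ) - 1) * ∑ d, M c' d * (∑ τ : Equiv.Perm (Fin n),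
          if τ c' = d then (u : Fin n → ℚ) (τ c) else 0) =
        (if c' = c then (n:ℚ) * N * (T u : Fin n → ℚ) c else 0)
          - N * (T u : Fin n → ℚ) c' := by
    intro c'
    rw [hM u c', hM u c]
    split_ifs with h
    · subst h
      simp_rw [F_diag, cnt_const z z, ← hNdef]
      simp_rw [Finset.mul_sum]
      rw [← Finset.sum_sub_distrib]
      refine Finset.sum_congr rfl fun d _ => ?_
      ring
    · rw [zero_sub, Finset.mul_sum, Finset.mul_sum, ← Finset.sum_neg_distrib]
      refine Finset.sum_congr rfl fun d _ => ?_
      rw [mul_left_comm, F_off _ hu _ _ _ (Ne.symm h), cnt_const z z, ← hNdef]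
      ring
  simp_rw [mul_assoc]
  rw [← Finset.mul_sum, key]
  have tot : ((n:ℚ) - 1) * (∑ c', ∑ d, M c' d * ∑ τ : Equiv.Perm (Fin n),
          if τ c' = d then (u : Fin n → ℚ) (τ c) else 0) = (n:ℚ) * N * (T u : Fin n → ℚ) c := by
    rw [Finset.mul_sum, Finset.sum_congr rfl (fun c' _ => inner c'), Finset.sum_sub_distrib,
      ← Finset.mul_sum, hTu]
    simp
  rw [div_mul_eq_mul_div, tot]
  field_simp
end

section
/- Let n ≥ 1, let b : Fin n → ℚ be the Borda weighting vector b(j) = n − 1 − j, and let ρ ∈ Equiv.Perm (Fin n) be the order-reversing permutation ρ(i) = n − 1 − i. The Borda count has reversal symmetry: for every full-ranking profile p : Equiv.Perm (Fin n) → ℚ, if q is the reversed profile defined by q(σ) = p(σ·ρ) (so that each ballot's ranking is completely reversed), then for every candidate c, T_b(q)(c) = (n − 1)·(Σ_σ p(σ)) − T_b(p)(c); in particular the sum-zero part of the results vector is negated, so the resulting ordinal ranking is the complete reversal of the original one. -/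
/-- reversal symmetry of the Borda count.  For `n ≥ 1`, the
Borda weighting vector `b(j) = n − 1 − j`, and the order-reversing permutation
`ρ = Fin.revPerm` (`ρ(i) = n − 1 − i`), if `q(σ) = p(σ·ρ)` is the reversed
profile of `p`, then `T_b(q)(c) = (n − 1)·(Σ_σ p(σ)) − T_b(p)(c)` for every
candidate `c`. -/
theorem borda_reversal_symmetry (n : ℕ) (hn : 1 ≤ n)
    (p q : Equiv.Perm (Fin n) → ℚ)
    (hq : ∀ σ : Equiv.Perm (Fin n), q σ = p (σ * Fin.revPerm)) (c : Fin n) :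
    ∑ σ : Equiv.Perm (Fin n), q σ * ((n : ℚ) - 1 - ((σ⁻¹ c : Fin n) : ℕ)) =
      ((n : ℚ) - 1) * (∑ σ : Equiv.Perm (Fin n), p σ) -
        ∑ σ : Equiv.Perm (Fin n), p σ * ((n : ℚ) - 1 - ((σ⁻¹ c : Fin n) : ℕ)) := by
  rw [Finset.mul_sum, ← Finset.sum_sub_distrib]
  refine Fintype.sum_equiv (Equiv.mulRight (Fin.revPerm : Equiv.Perm (Fin n))) _ _ ?_
  intro σ
  have h : (((σ * Fin.revPerm : Equiv.Perm (Fin n))⁻¹ c : Fin n) : ℕ) = n - ((σ⁻¹ c : Fin n).val + 1) := by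
    rw [mul_inv_rev, Equiv.Perm.mul_apply, ← Fin.val_rev]
    rfl
  have hlt : (σ⁻¹ c : Fin n).val + 1 ≤ n := (σ⁻¹ c).isLt
  rw [Equiv.coe_mulRight, hq, h, Nat.cast_sub hlt]
  push_cast
  ring
end

section
/- Let n ≥ 2, 1 ≤ k ≤ n − 2, and τ ∈ ℚ. For every top-k profile p : (Fin k ↪ Fin n) → ℚ and every candidate c, Σ_{d ≠ c} P^k_τ(p)(c, d) = T_{b^τ}(p)(c), where b^τ : Fin (k+1) → ℚ is given by b^τ(i) = n − 1 − i for i < k and b^τ(k) = τ·(n − k − 1). In other words, T_{b^τ} is recoverable from the generalized pairs map P^k_τ via the linear map summing each candidate's row. -/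
/-- The weight `w*(f, c)` that a top-`k` ballot `f : Fin k ↪ Fin n` assigns to
candidate `c` under a weighting vector `w : Fin (k+1) → ℚ`: `w(i)` if `f(i) = c`
and `w(k)` if `c` is not among the top `k`. -/
def topkWeight {n k : ℕ} (w : Fin (k + 1) → ℚ) (f : Fin k ↪ Fin n) (c : Fin n) : ℚ :=
  (∑ i : Fin k, if f i = c then w i.castSucc else 0) +
    (if ∀ i, f i ≠ c then w (Fin.last k) else 0)

/-- The contribution `u_f(c, d)` of a top-`k` ballot `f` to the generalized
pairs map `P^k_τ`: `1` if `f` ranks `c` above `d`, `τ` if neither `c` nor `d`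
is ranked, and `0` otherwise (also `0` on the diagonal). -/
def pairContribution {n k : ℕ} (τ : ℚ) (f : Fin k ↪ Fin n) (c d : Fin n) : ℚ :=
  if c = d then 0
  else if ∃ i, f i = c ∧ ∀ j, f j = d → i < j then 1
  else if (¬ ∃ i, f i = c) ∧ (¬ ∃ j, f j = d) then τ
  else 0

theorem row_sum_aux (n k : ℕ) (τ : ℚ) (f : Fin k ↪ Fin n) (c : Fin n) :
    ∑ d ∈ Finset.univ.filter (fun d : Fin n => d ≠ c), pairContribution τ f c d =
      topkWeight (fun i : Fin (k + 1) =>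
          if (i : ℕ) < k then (n : ℚ) - 1 - ((i : ℕ) : ℚ)
          else τ * ((n : ℚ) - k - 1)) f c := by
  have h0 : ∑ d ∈ Finset.univ.filter (fun d : Fin n => d ≠ c), pairContribution τ f c d
      = ∑ d : Fin n, pairContribution τ f c d := by
    apply Finset.sum_subset (Finset.subset_univ _)
    intro d _ hd
    have : d = c := by simpa using hd
    simp [pairContribution, this]
  rw [h0]
  by_cases hc : ∃ i, f i = c
  · obtain ⟨i, rfl⟩ := hc
    have h1 : ∀ d : Fin n, pairContribution τ f (f i) d =
        1 - (if d ∈ (Finset.Iic i).map f then (1 : ℚ) else 0) := by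
      intro d
      by_cases hd : d ∈ (Finset.Iic i).map f
      · obtain ⟨j, hj, rfl⟩ := Finset.mem_map.1 hd
        have hj' : j ≤ i := by simpa using hj
        simp [pairContribution, hj']
      · have h2 : ∀ j, f j = d → i < j := by
          intro j hj
          by_contra hlt
          exact hd (Finset.mem_map.2 ⟨j, by simpa using hlt, hj⟩)
        have h3 : f i ≠ d := fun h => lt_irrefl _ (h2 i h)
        rw [pairContribution, if_neg h3, if_pos ⟨i, rfl, h2⟩, if_neg hd]
        simp
    rw [Finset.sum_congr rfl (fun d _ => h1 d), Finset.sum_sub_distrib, Finset.sum_ite_mem]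
    have h4 : ¬ ∀ j, f j ≠ f i := fun h => h i rfl
    rw [topkWeight, if_neg h4]
    simp
    ring
  · push Not at hc
    have h1 : ∀ d : Fin n, pairContribution τ f c d =
        τ * (1 - (if d = c then (1 : ℚ) else 0)
          - (if d ∈ Finset.univ.map f then (1 : ℚ) else 0)) := by
      intro d
      by_cases hdc : d = c
      · subst hdc
        simp [pairContribution, hc]
      · by_cases hd : ∃ j, f j = d
        · simp [pairContribution, hc, hd, hdc]
        · simp [pairContribution, hc, hd, hdc, Ne.symm hdc]
    rw [Finset.sum_congr rfl (fun d _ => h1 d), ← Finset.mul_sum, Finset.sum_sub_distrib,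
      Finset.sum_sub_distrib, Finset.sum_ite_mem, topkWeight, if_pos hc]
    simp [hc]
    left
    ring

/-- For `n ≥ 2`, `1 ≤ k ≤ n − 2` and any `τ : ℚ`, summing
each candidate's row of the generalized pairs map `P^k_τ` recovers the
positional map `T_{b^τ}`, where `b^τ(i) = n − 1 − i` for `i < k` and
`b^τ(k) = τ·(n − k − 1)`. -/
theorem row_sum_of_generalized_pairs (n k : ℕ) (hn : 2 ≤ n)
    (hk1 : 1 ≤ k) (hk2 : k ≤ n - 2) (τ : ℚ)
    (p : (Fin k ↪ Fin n) → ℚ) (c : Fin n) :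
    ∑ d ∈ Finset.univ.filter (fun d : Fin n => d ≠ c),
        ∑ f : Fin k ↪ Fin n, p f * pairContribution τ f c d =
      ∑ f : Fin k ↪ Fin n, p f *
        topkWeight (fun i : Fin (k + 1) =>
          if (i : ℕ) < k then (n : ℚ) - 1 - ((i : ℕ) : ℚ)
          else τ * ((n : ℚ) - k - 1)) f c := by
  rw [Finset.sum_comm]
  refine Finset.sum_congr rfl fun f _ => ?_
  rw [← Finset.mul_sum, row_sum_aux]
end

section
/- Let n ≥ 2, 1 ≤ k ≤ n − 2, and τ ∈ ℚ with τ ≥ 0, and set E = Σ_{i=1}^{k} (n − i) + τ·(n − k)·(n − k − 1), which is positive. For every top-k profile p : (Fin k ↪ Fin n) → ℚ and every candidate c, T_b(p)(c) = (1/2)·( Σ_{d ≠ c} (P^k_τ(p)(c, d) − P^k_τ(p)(d, c)) + ((n − 1)/E)·Σ_{c' ≠ d'} P^k_τ(p)(c', d') ), where b : Fin (k+1) → ℚ is given by b(i) = n − 1 − i for i < k and b(k) = (n − k − 1)/2. In other words, T_b is recoverable from the generalized pairs map P^k_τ. -/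
lemma aux_sum_ind {n k : ℕ} (f : Fin k ↪ Fin n) (g : Fin k → ℚ) (i : Fin k) :
    (∑ j, if f j = f i then g j else 0) = g i := by
  simp [f.injective.eq_iff]

lemma aux_sum_none {n k : ℕ} (f : Fin k ↪ Fin n) (g : Fin k → ℚ) (c : Fin n)
    (h : ∀ i, f i ≠ c) : (∑ j, if f j = c then g j else 0) = 0 := by
  simp [h]

lemma aux_sum_all {n k : ℕ} (f : Fin k ↪ Fin n) (g : Fin k → ℚ) :
    (∑ d, ∑ j, if f j = d then g j else 0) = ∑ j, g j := by
  rw [Finset.sum_comm]; simp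

lemma aux_card_le {k : ℕ} (i : Fin k) : (∑ j : Fin k, if j ≤ i then (1:ℚ) else 0) = i + 1 := by
  rw [Finset.sum_boole]
  have : (Finset.univ.filter (fun j => j ≤ i)) = Finset.Iic i := by ext; simp
  rw [this]; simp

lemma aux_card_lt {k : ℕ} (i : Fin k) : (∑ j : Fin k, if j < i then (1:ℚ) else 0) = i := by
  rw [Finset.sum_boole]
  have : (Finset.univ.filter (fun j => j < i)) = Finset.Iio i := by ext; simp
  rw [this]; simp

lemma row_ranked {n k : ℕ} (τ : ℚ) (f : Fin k ↪ Fin n) (i : Fin k) :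
    ∑ d, pairContribution τ f (f i) d = n - 1 - i := by
  have h : ∀ d, pairContribution τ f (f i) d
      = 1 - ∑ j, if f j = d then (if j ≤ i then (1:ℚ) else 0) else 0 := by
    intro d
    by_cases hd : ∃ j, f j = d
    · obtain ⟨j, rfl⟩ := hd
      rw [aux_sum_ind]
      simp only [pairContribution, f.injective.eq_iff]
      by_cases hji : j ≤ i
      · have : ¬ i < j := not_lt.mpr hji
        simp [hji]
      · have h1 : i < j := not_le.mp hji
        simp [hji, h1.ne, h1]
    · push Not at hd
      rw [aux_sum_none _ _ _ hd]
      simp [pairContribution, hd, f.injective.eq_iff]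
  rw [Finset.sum_congr rfl (fun d _ => h d), Finset.sum_sub_distrib, aux_sum_all, aux_card_le]
  simp; ring

lemma col_ranked {n k : ℕ} (τ : ℚ) (f : Fin k ↪ Fin n) (i : Fin k) :
    ∑ d, pairContribution τ f d (f i) = i := by
  have h : ∀ d, pairContribution τ f d (f i)
      = ∑ j, if f j = d then (if j < i then (1:ℚ) else 0) else 0 := by
    intro d
    by_cases hd : ∃ j, f j = d
    · obtain ⟨j, rfl⟩ := hd
      rw [aux_sum_ind]
      simp only [pairContribution, f.injective.eq_iff]
      by_cases hji : j < i
      · simp [hji, hji.ne]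
      · simp [hji]
    · push Not at hd
      rw [aux_sum_none _ _ _ hd]
      simp [pairContribution, hd, f.injective.eq_iff]
  rw [Finset.sum_congr rfl (fun d _ => h d), aux_sum_all, aux_card_lt]

lemma row_unranked {n k : ℕ} (τ : ℚ) (f : Fin k ↪ Fin n) (c : Fin n) (hc : ∀ i, f i ≠ c) :
    ∑ d, pairContribution τ f c d = τ * (n - k - 1) := by
  have h : ∀ d, pairContribution τ f c d
      = τ - (∑ j, if f j = d then τ else 0) - if c = d then τ else 0 := by
    intro d
    by_cases hd : ∃ j, f j = d
    · obtain ⟨j, rfl⟩ := hd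
      rw [aux_sum_ind f (fun _ => τ)]
      simp [pairContribution, hc, (hc _).symm]
    · push Not at hd
      rw [aux_sum_none f (fun _ => τ) _ hd]
      simp [pairContribution, hd, hc]
      split_ifs <;> simp
  rw [Finset.sum_congr rfl (fun d _ => h d), Finset.sum_sub_distrib, Finset.sum_sub_distrib,
    aux_sum_all f (fun _ => τ)]
  simp; ring

lemma col_unranked {n k : ℕ} (τ : ℚ) (f : Fin k ↪ Fin n) (c : Fin n) (hc : ∀ i, f i ≠ c) :
    ∑ d, pairContribution τ f d c = k + τ * (n - k - 1) := by
  have h : ∀ d, pairContribution τ f d c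
      = τ + (∑ j, if f j = d then (1 - τ) else 0) - if c = d then τ else 0 := by
    intro d
    by_cases hd : ∃ j, f j = d
    · obtain ⟨j, rfl⟩ := hd
      rw [aux_sum_ind f (fun _ => 1 - τ)]
      simp [pairContribution, hc, (hc _).symm]
    · push Not at hd
      rw [aux_sum_none f (fun _ => 1 - τ) _ hd]
      simp [pairContribution, hd, hc, eq_comm (a := d)]
      split_ifs <;> simp
  rw [Finset.sum_congr rfl (fun d _ => h d), Finset.sum_sub_distrib, Finset.sum_add_distrib,
    aux_sum_all f (fun _ => 1 - τ)]
  simp; ring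

lemma total_pairs {n k : ℕ} (τ : ℚ) (f : Fin k ↪ Fin n) :
    ∑ c, ∑ d, pairContribution τ f c d =
      (∑ i ∈ Finset.range k, ((n : ℚ) - (i + 1))) + τ * ((n : ℚ) - k) * ((n : ℚ) - k - 1) := by
  have h : ∀ c, ∑ d, pairContribution τ f c d = τ * (n - k - 1) +
      ∑ j, if f j = c then ((n : ℚ) - (((j : ℕ) : ℚ) + 1)) - τ * (n - k - 1) else 0 := by
    intro c
    by_cases hc : ∃ j, f j = c
    · obtain ⟨j, rfl⟩ := hc
      rw [aux_sum_ind f (fun j => ((n : ℚ) - (((j : ℕ) : ℚ) + 1)) - τ * (n - k - 1)), row_ranked]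
      ring
    · push Not at hc
      rw [aux_sum_none f (fun j => ((n : ℚ) - (((j : ℕ) : ℚ) + 1)) - τ * (n - k - 1)) _ hc,
        row_unranked _ _ _ hc]
      ring
  rw [Finset.sum_congr rfl (fun d _ => h d), Finset.sum_add_distrib,
    aux_sum_all f (fun j => ((n : ℚ) - (((j : ℕ) : ℚ) + 1)) - τ * (n - k - 1)),
    Finset.sum_sub_distrib, Fin.sum_univ_eq_sum_range (fun j => (n : ℚ) - ((j : ℚ) + 1))]
  simp only [Finset.sum_const, Finset.card_univ, Fintype.card_fin, nsmul_eq_mul]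
  ring

lemma ballot_identity {n k : ℕ} (τ : ℚ) (f : Fin k ↪ Fin n) (c : Fin n) :
    topkWeight (fun i : Fin (k + 1) =>
            if (i : ℕ) < k then (n : ℚ) - 1 - ((i : ℕ) : ℚ)
            else ((n : ℚ) - k - 1) / 2) f c =
    (1 / 2) * (∑ d, pairContribution τ f c d - ∑ d, pairContribution τ f d c + (n - 1)) := by
  unfold topkWeight
  by_cases hc : ∃ j, f j = c
  · obtain ⟨j, rfl⟩ := hc
    rw [row_ranked, col_ranked, if_neg (by push Not; exact ⟨j, rfl⟩), aux_sum_ind f (fun i =>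
      (fun i : Fin (k + 1) => if (i : ℕ) < k then (n : ℚ) - 1 - ((i : ℕ) : ℚ)
            else ((n : ℚ) - k - 1) / 2) i.castSucc)]
    simp; ring
  · push Not at hc
    rw [row_unranked _ _ _ hc, col_unranked _ _ _ hc, if_pos hc]
    simp [hc]; ring

/-- For `n ≥ 2`, `1 ≤ k ≤ n − 2` and `τ ≥ 0`, the constant
`E = Σ_{i=1}^k (n − i) + τ·(n − k)·(n − k − 1)` is positive, and the averaged
Borda positional map `T_b` is recovered from the generalized pairs map `P^k_τ`
via `T_b(p)(c) = ½(Σ_{d ≠ c} (P(c,d) − P(d,c)) + ((n−1)/E)·Σ_{c' ≠ d'} P(c',d'))`,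
where `b(i) = n − 1 − i` for `i < k` and `b(k) = (n − k − 1)/2`. -/
theorem averaged_borda_recoverable_from_generalized_pairs (n k : ℕ) (hn : 2 ≤ n)
    (hk1 : 1 ≤ k) (hk2 : k ≤ n - 2) (τ : ℚ) (hτ : 0 ≤ τ)
    (E : ℚ)
    (hE : E = (∑ i ∈ Finset.range k, ((n : ℚ) - (i + 1))) +
      τ * ((n : ℚ) - k) * ((n : ℚ) - k - 1)) :
    0 < E ∧
    ∀ (p : (Fin k ↪ Fin n) → ℚ) (c : Fin n),
      ∑ f : Fin k ↪ Fin n, p f *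
          topkWeight (fun i : Fin (k + 1) =>
            if (i : ℕ) < k then (n : ℚ) - 1 - ((i : ℕ) : ℚ)
            else ((n : ℚ) - k - 1) / 2) f c =
        (1 / 2) *
          ((∑ d ∈ Finset.univ.filter (fun d : Fin n => d ≠ c),
              ((∑ f : Fin k ↪ Fin n, p f * pairContribution τ f c d) -
                ∑ f : Fin k ↪ Fin n, p f * pairContribution τ f d c)) +
            ((n : ℚ) - 1) / E *
              ∑ q ∈ Finset.univ.filter (fun q : Fin n × Fin n => q.1 ≠ q.2),
                ∑ f : Fin k ↪ Fin n, p f * pairContribution τ f q.1 q.2) := by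
  have hpos : 0 < E := by
    have hkn : (k : ℚ) + 2 ≤ n := by
      have : k + 2 ≤ n := by omega
      exact_mod_cast this
    rw [hE]
    refine add_pos_of_pos_of_nonneg (Finset.sum_pos ?_ ⟨0, by simp; omega⟩) ?_
    · intro i hi
      have : ((i : ℕ) : ℚ) + 1 ≤ k := by
        have := Finset.mem_range.mp hi
        exact_mod_cast this
      linarith
    · exact mul_nonneg (mul_nonneg hτ (by linarith)) (by linarith)
  refine ⟨hpos, fun p c => ?_⟩
  have h1 : (∑ d ∈ Finset.univ.filter (fun d : Fin n => d ≠ c),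
              ((∑ f : Fin k ↪ Fin n, p f * pairContribution τ f c d) -
                ∑ f : Fin k ↪ Fin n, p f * pairContribution τ f d c)) =
      ∑ f, p f * (∑ d, pairContribution τ f c d - ∑ d, pairContribution τ f d c) := by
    rw [Finset.sum_filter_of_ne]
    · rw [Finset.sum_sub_distrib, Finset.sum_comm, Finset.sum_comm (γ := Fin n)]
      simp only [← Finset.mul_sum]
      rw [← Finset.sum_sub_distrib]
      exact Finset.sum_congr rfl fun f _ => by ring
    · rintro d - hd rfl
      simp at hd
  have h2 : (∑ q ∈ Finset.univ.filter (fun q : Fin n × Fin n => q.1 ≠ q.2),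
                ∑ f : Fin k ↪ Fin n, p f * pairContribution τ f q.1 q.2) = E * ∑ f, p f := by
    rw [Finset.sum_filter_of_ne]
    · rw [Finset.sum_comm, Finset.mul_sum]
      refine Finset.sum_congr rfl fun f _ => ?_
      rw [← Finset.mul_sum, Fintype.sum_prod_type, total_pairs, ← hE, mul_comm]
    · rintro ⟨a, b⟩ - hd hab
      simp only at hab
      subst hab
      simp [pairContribution] at hd
  rw [h1, h2, ← mul_assoc, div_mul_cancel₀ _ hpos.ne', Finset.mul_sum, ← Finset.sum_add_distrib,
    Finset.mul_sum]
  refine Finset.sum_congr rfl fun f _ => ?_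
  rw [ballot_identity τ]
  ring
end

section
/- Let n ≥ 3, 1 ≤ k ≤ n − 2, and τ ∈ ℚ with 0 ≤ τ ≤ 1, and let w : Fin (k+1) → ℚ be a weighting vector. Then the positional map T_w on top-k profiles is recoverable from the generalized pairs map P^k_τ — i.e., there exists a ℚ-linear map R : (Fin n × Fin n → ℚ) → (Fin n → ℚ) with T_w(p) = R(P^k_τ(p)) for every top-k profile p — if and only if the sum-zero part of the extension w̄ lies in the ℚ-span of the sum-zero parts of b̄ and b̄^τ, where b, b^τ : Fin (k+1) → ℚ are given by b(i) = b^τ(i) = n − 1 − i for i < k, b(k) = (n − k − 1)/2, and b^τ(k) = τ·(n − k − 1). -/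
/-- The positional map `T_w` on top-`k` profiles, as a `ℚ`-linear map. -/
noncomputable def topkPositionalMap (n k : ℕ) (w : Fin (k + 1) → ℚ) :
    ((Fin k ↪ Fin n) → ℚ) →ₗ[ℚ] (Fin n → ℚ) where
  toFun p := fun c => ∑ f : Fin k ↪ Fin n, p f * topkWeight w f c
  map_add' p q := by funext c; simp [add_mul, Finset.sum_add_distrib]
  map_smul' a p := by funext c; simp [Finset.mul_sum, mul_assoc]

/-- The generalized pairs map `P^k_τ`, as a `ℚ`-linear map. -/
noncomputable def generalizedPairsMap (n k : ℕ) (τ : ℚ) :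
    ((Fin k ↪ Fin n) → ℚ) →ₗ[ℚ] (Fin n × Fin n → ℚ) where
  toFun p := fun cd => ∑ f : Fin k ↪ Fin n, p f * pairContribution τ f cd.1 cd.2
  map_add' p q := by funext cd; simp [add_mul, Finset.sum_add_distrib]
  map_smul' a p := by funext cd; simp [Finset.mul_sum, mul_assoc]

/-- The extension `w̄ : Fin n → ℚ` of a top-`k` weighting vector
`w : Fin (k+1) → ℚ`: it agrees with `w` on the first `k` coordinates and
repeats `w(k)` on the remaining `n − k` coordinates. -/
def extendWeight (n k : ℕ) (w : Fin (k + 1) → ℚ) : Fin n → ℚ :=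
  fun j => if h : (j : ℕ) < k then w ⟨(j : ℕ), Nat.lt_succ_of_lt h⟩ else w (Fin.last k)

/-- The sum-zero part `v̂ = v − ((Σ_c v(c))/n)·𝟙` of a vector `v : Fin n → ℚ`. -/
def sumZeroPart (n : ℕ) (v : Fin n → ℚ) : Fin n → ℚ :=
  fun c => v c - (∑ c', v c') / n

open Finset

namespace TopkAux

/-- the standard ballot -/
def f0 {n k : ℕ} (h : k ≤ n) : Fin k ↪ Fin n := (Fin.castLEEmb h)

theorem exists_perm {n m : ℕ} (x y : Fin m ↪ Fin n) :
    ∃ σ : Equiv.Perm (Fin n), ∀ i, σ (x i) = y i := by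
  have h := Equiv.Perm.isMultiplyPretransitive (Fin n) m
  obtain ⟨g, hg⟩ := h.exists_smul_eq x y
  refine ⟨g, fun i => ?_⟩
  have := DFunLike.congr_fun hg i
  simpa using this

theorem exists_perm3 {n : ℕ} {a b c a' b' c' : Fin n} (h1 : a ≠ b) (h2 : a ≠ c) (h3 : b ≠ c)
    (h1' : a' ≠ b') (h2' : a' ≠ c') (h3' : b' ≠ c') :
    ∃ σ : Equiv.Perm (Fin n), σ a = a' ∧ σ b = b' ∧ σ c = c' := by
  have key : ∀ {a b c : Fin n}, a ≠ b → a ≠ c → b ≠ c → Function.Injective ![a, b, c] := by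
    intro a b c h1 h2 h3 i j hij
    fin_cases i <;> fin_cases j <;> simp_all
  obtain ⟨σ, hσ⟩ := exists_perm ⟨_, key h1 h2 h3⟩ ⟨_, key h1' h2' h3'⟩
  exact ⟨σ, hσ 0, hσ 1, hσ 2⟩

theorem weight_perm {n k : ℕ} (w : Fin (k + 1) → ℚ) (f : Fin k ↪ Fin n)
    (σ : Equiv.Perm (Fin n)) (c : Fin n) :
    topkWeight w (f.trans σ.toEmbedding) (σ c) = topkWeight w f c := by
  simp [topkWeight]

theorem pair_perm {n k : ℕ} (τ : ℚ) (f : Fin k ↪ Fin n)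
    (σ : Equiv.Perm (Fin n)) (c d : Fin n) :
    pairContribution τ (f.trans σ.toEmbedding) (σ c) (σ d) = pairContribution τ f c d := by
  simp [pairContribution]

theorem weight_f0 {n k : ℕ} (h : k ≤ n) (w : Fin (k + 1) → ℚ) (c : Fin n) :
    topkWeight w (f0 h) c = extendWeight n k w c := by
  unfold topkWeight extendWeight
  by_cases hc : (c : ℕ) < k
  · have e : ∀ i : Fin k, (f0 h i = c) ↔ i = ⟨c, hc⟩ := by
      intro i; simp [f0, Fin.ext_iff]
    simp only [e, hc, dif_pos]
    rw [if_neg (by push Not; exact ⟨⟨c, hc⟩, by simp [f0]⟩)]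
    simp
  · have e : ∀ i : Fin k, f0 h i ≠ c := by
      intro i hi; apply hc; rw [← hi]; simp [f0]
    simp [e, hc]

theorem pair_f0 {n k : ℕ} (h : k ≤ n) (τ : ℚ) (a b : Fin n) :
    pairContribution τ (f0 h) a b = if a = b then 0 else if (a : ℕ) < k ∧ a < b then 1
      else if k ≤ (a : ℕ) ∧ k ≤ (b : ℕ) then τ else 0 := by
  have e1 : ∀ a : Fin n, (∃ i, f0 h i = a) ↔ (a : ℕ) < k := by
    intro a
    constructor
    · rintro ⟨i, rfl⟩; simp [f0]
    · intro ha; exact ⟨⟨a, ha⟩, by simp [f0]⟩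
  unfold pairContribution
  simp only [e1, not_lt]
  by_cases hab : a = b
  · simp [hab]
  have e2 : (∃ i, f0 h i = a ∧ ∀ j, f0 h j = b → i < j) ↔ ((a : ℕ) < k ∧ a < b) := by
    constructor
    · rintro ⟨i, rfl, hi⟩
      refine ⟨by simp [f0], ?_⟩
      by_cases hb : (b : ℕ) < k
      · have := hi ⟨b, hb⟩ (by simp [f0])
        simp only [f0, Fin.lt_def] at *
        simpa using this
      · simp only [f0, Fin.lt_def]
        have := i.2
        simp; omega
    · rintro ⟨ha, hb⟩
      refine ⟨⟨a, ha⟩, by simp [f0], ?_⟩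
      rintro j rfl
      simpa [f0, Fin.lt_def] using hb
  simp only [e2]

/-- row sums -/
def A (n k : ℕ) (τ : ℚ) (h : k ≤ n) (j : Fin n) : ℚ := ∑ b, pairContribution τ (f0 h) j b
/-- column sums -/
def B (n k : ℕ) (τ : ℚ) (h : k ≤ n) (j : Fin n) : ℚ := ∑ a, pairContribution τ (f0 h) a j

theorem cnt {n k : ℕ} (h : k < n) : (∑ b : Fin n, if k ≤ (b : ℕ) then (1 : ℚ) else 0) = n - k := by
  have : ∀ b : Fin n, (k ≤ (b : ℕ)) ↔ b ∈ Finset.Ici (⟨k, h⟩ : Fin n) := by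
    intro b; simp [Fin.le_def]
  simp only [this, Finset.sum_ite_mem, Finset.univ_inter, Finset.sum_const, Fin.card_Ici]
  simp [Nat.cast_sub h.le]

theorem cnt2 {n : ℕ} (j : Fin n) : (∑ b : Fin n, if b < j then (1 : ℚ) else 0) = (j : ℕ) := by
  have : ∀ b : Fin n, (b < j) ↔ b ∈ Finset.Iio j := by
    intro b; simp
  simp only [this, Finset.sum_ite_mem, Finset.univ_inter, Finset.sum_const, Fin.card_Iio]
  simp

theorem cnt3 {n : ℕ} (j : Fin n) :
    (∑ b : Fin n, if j < b then (1 : ℚ) else 0) = (n : ℚ) - 1 - (j : ℕ) := by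
  have : ∀ b : Fin n, (j < b) ↔ b ∈ Finset.Ioi j := by
    intro b; simp
  simp only [this, Finset.sum_ite_mem, Finset.univ_inter, Finset.sum_const, Fin.card_Ioi]
  have hj := j.2
  have : (((n - 1 - (j:ℕ) : ℕ) : ℚ)) + 1 + (j : ℕ) = n := by
    norm_cast; omega
  simp only [nsmul_eq_mul, mul_one]
  linarith

theorem A_eq {n k : ℕ} (h : k < n) (τ : ℚ) (j : Fin n) :
    A n k τ h.le j = if (j : ℕ) < k then (n : ℚ) - 1 - (j : ℕ) else τ * ((n : ℚ) - k - 1) := by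
  unfold A
  split_ifs with hj
  · rw [← cnt3]
    refine Finset.sum_congr rfl fun b _ => ?_
    rw [pair_f0]
    grind
  · have : ∀ b, pairContribution τ (f0 h.le) j b
        = τ * (if k ≤ (b : ℕ) then (1 : ℚ) else 0) - (if b = j then τ else 0) := by
      intro b
      rw [pair_f0]
      grind
    simp only [this, Finset.sum_sub_distrib, ← Finset.mul_sum, cnt h]
    simp; ring

theorem B_eq {n k : ℕ} (h : k < n) (τ : ℚ) (j : Fin n) :
    B n k τ h.le j = if (j : ℕ) < k then ((j : ℕ) : ℚ) else k + τ * ((n : ℚ) - k - 1) := by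
  unfold B
  split_ifs with hj
  · rw [← cnt2]
    refine Finset.sum_congr rfl fun b _ => ?_
    rw [pair_f0]
    grind
  · have : ∀ b, pairContribution τ (f0 h.le) b j
        = (if b < (⟨k, h⟩ : Fin n) then (1 : ℚ) else 0) +
          τ * (if k ≤ (b : ℕ) then (1 : ℚ) else 0) - (if b = j then τ else 0) := by
      intro b
      rw [pair_f0]
      grind
    simp only [this, Finset.sum_sub_distrib, Finset.sum_add_distrib, ← Finset.mul_sum, cnt h, cnt2]
    simp; ring

theorem szp_eq {n : ℕ} (hn : n ≠ 0) {v u t : Fin n → ℚ} {x y z : ℚ}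
    (h : ∀ j, v j = x * u j + y * t j + z) :
    sumZeroPart n v = x • sumZeroPart n u + y • sumZeroPart n t := by
  have hn' : (n : ℚ) ≠ 0 := by exact_mod_cast hn
  funext j
  simp only [sumZeroPart, Pi.add_apply, Pi.smul_apply, smul_eq_mul, h, Finset.sum_add_distrib,
    ← Finset.mul_sum]
  simp
  field_simp
  ring

theorem fwd {n k : ℕ} (hn : 3 ≤ n) (hk : k ≤ n) (τ : ℚ) (w : Fin (k + 1) → ℚ)
    (R : (Fin n × Fin n → ℚ) →ₗ[ℚ] (Fin n → ℚ))
    (hR : topkPositionalMap n k w = R ∘ₗ generalizedPairsMap n k τ) :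
    ∃ x y z : ℚ, ∀ j, extendWeight n k w j = x * A n k τ hk j + y * B n k τ hk j + z := by
  classical
  set r : Fin n → Fin n × Fin n → ℚ := fun c ab => R (Pi.single ab 1) c with hr
  have h1 : ∀ f c, topkWeight w f c = ∑ a, ∑ b, r c (a, b) * pairContribution τ f a b := by
    intro f c
    have := congrFun (LinearMap.congr_fun hR (Pi.single f 1)) c
    have hT : topkPositionalMap n k w (Pi.single f 1) c = topkWeight w f c := by
      simp [topkPositionalMap, Pi.single_apply]
    have hP : generalizedPairsMap n k τ (Pi.single f 1)
        = fun ab => pairContribution τ f ab.1 ab.2 := by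
      funext ab
      simp [generalizedPairsMap, Pi.single_apply]
    rw [hT, LinearMap.comp_apply, hP, LinearMap.pi_apply_eq_sum_univ R] at this
    rw [this, ← Fintype.sum_prod_type']
    simp only [Finset.sum_apply, Pi.smul_apply, smul_eq_mul, hr]
    refine Finset.sum_congr rfl fun ab _ => ?_
    rw [mul_comm]
    have hs : (fun j => if ab = j then (1 : ℚ) else 0) = Pi.single (ab.1, ab.2) 1 := by
      funext i
      simp [Pi.single_apply, eq_comm]
    rw [hs]
  set ρ : Fin n → Fin n → Fin n → ℚ :=
    fun j a b => ∑ σ : Equiv.Perm (Fin n), r (σ j) (σ a, σ b) with hρ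
  have inv : ∀ (π : Equiv.Perm (Fin n)) j a b, ρ (π j) (π a) (π b) = ρ j a b := by
    intro π j a b
    simp only [hρ]
    exact Fintype.sum_equiv (Equiv.mulRight π) _ _ (fun σ => by simp)
  have h2 : ∀ j, (Fintype.card (Equiv.Perm (Fin n)) : ℚ) * extendWeight n k w j
      = ∑ a, ∑ b, ρ j a b * pairContribution τ (f0 hk) a b := by
    intro j
    have : ∀ σ : Equiv.Perm (Fin n), extendWeight n k w j =
        ∑ a, ∑ b, r (σ j) (σ a, σ b) * pairContribution τ (f0 hk) a b := by
      intro σ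
      rw [← weight_f0 hk, ← weight_perm w _ σ, h1, ← Equiv.sum_comp σ]
      refine Finset.sum_congr rfl fun a _ => ?_
      rw [← Equiv.sum_comp σ]
      refine Finset.sum_congr rfl fun b _ => ?_
      rw [pair_perm]
    calc _ = ∑ σ : Equiv.Perm (Fin n), extendWeight n k w j := by simp
      _ = ∑ σ : Equiv.Perm (Fin n), ∑ a, ∑ b, r (σ j) (σ a, σ b) * pairContribution τ (f0 hk) a b :=
          Finset.sum_congr rfl fun σ _ => this σ
      _ = _ := by
          rw [Finset.sum_comm]
          refine Finset.sum_congr rfl fun a _ => ?_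
          rw [Finset.sum_comm]
          refine Finset.sum_congr rfl fun b _ => ?_
          rw [Finset.sum_mul]
  let e0 : Fin n := ⟨0, by omega⟩
  let e1 : Fin n := ⟨1, by omega⟩
  let e2 : Fin n := ⟨2, by omega⟩
  have h01 : e0 ≠ e1 := by simp [e0, e1]
  have h02 : e0 ≠ e2 := by simp [e0, e2]
  have h12 : e1 ≠ e2 := by simp [e1, e2]
  have third : ∀ a b : Fin n, ∃ c, a ≠ c ∧ b ≠ c := by
    intro a b
    by_contra! hcon
    have := hcon e0
    have := hcon e1
    have := hcon e2
    grind
  have hα : ∀ j b, j ≠ b → ρ j j b = ρ e0 e0 e1 := by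
    intro j b hjb
    obtain ⟨c, hc1, hc2⟩ := third j b
    obtain ⟨σ, s1, s2, s3⟩ := exists_perm3 h01 h02 h12 hjb hc1 hc2
    rw [← inv σ e0, s1, s2]
  have hβ : ∀ j a, j ≠ a → ρ j a j = ρ e0 e1 e0 := by
    intro j b hjb
    obtain ⟨c, hc1, hc2⟩ := third j b
    obtain ⟨σ, s1, s2, s3⟩ := exists_perm3 h01 h02 h12 hjb hc1 hc2
    rw [← inv σ e0, s1, s2]
  have hγ : ∀ j a b, j ≠ a → j ≠ b → a ≠ b → ρ j a b = ρ e0 e1 e2 := by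
    intro j a b h1 h2 h3
    obtain ⟨σ, s1, s2, s3⟩ := exists_perm3 h01 h02 h12 h1 h2 h3
    rw [← inv σ e0, s1, s2, s3]
  generalize ρ e0 e0 e1 = α at hα
  generalize ρ e0 e1 e0 = β at hβ
  generalize ρ e0 e1 e2 = γ at hγ
  have h3 : ∀ j a b, ρ j a b * pairContribution τ (f0 hk) a b =
      (if a = j then (α - γ) * pairContribution τ (f0 hk) j b else 0) +
      (if b = j then (β - γ) * pairContribution τ (f0 hk) a j else 0) +
      γ * pairContribution τ (f0 hk) a b := by
    intro j a b
    by_cases hab : a = b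
    · subst hab
      have : ∀ c, pairContribution τ (f0 hk) c c = 0 := by intro c; simp [pairContribution]
      split_ifs <;> simp_all
    by_cases haj : a = j
    · subst haj
      rw [hα _ _ hab, if_pos rfl, if_neg (Ne.symm hab)]; ring
    by_cases hbj : b = j
    · subst hbj
      rw [hβ _ _ (Ne.symm hab), if_pos rfl, if_neg hab]; ring
    rw [hγ _ _ _ (Ne.symm haj) (Ne.symm hbj) hab, if_neg haj, if_neg hbj]; ring
  have hN : (Fintype.card (Equiv.Perm (Fin n)) : ℚ) ≠ 0 := by
    exact_mod_cast Fintype.card_ne_zero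
  generalize (Fintype.card (Equiv.Perm (Fin n)) : ℚ) = N at h2 hN
  refine ⟨(α - γ) / N, (β - γ) / N,
    γ * (∑ a, ∑ b, pairContribution τ (f0 hk) a b) / N, fun j => ?_⟩
  have h4 : N * extendWeight n k w j = (α - γ) * A n k τ hk j + (β - γ) * B n k τ hk j +
      γ * (∑ a, ∑ b, pairContribution τ (f0 hk) a b) := by
    rw [h2]
    simp only [h3, Finset.sum_add_distrib, A, B, Finset.mul_sum]
    congr 2
    · rw [Finset.sum_comm]
      simp
    · simp
  field_simp
  linarith

theorem bwd {n k : ℕ} (hk : k ≤ n) (τ : ℚ) (w : Fin (k + 1) → ℚ) (x y z : ℚ)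
    (hS : ∑ a, A n k τ hk a ≠ 0)
    (hw : ∀ j, extendWeight n k w j = x * A n k τ hk j + y * B n k τ hk j + z) :
    ∃ R : (Fin n × Fin n → ℚ) →ₗ[ℚ] (Fin n → ℚ),
      topkPositionalMap n k w = R ∘ₗ generalizedPairsMap n k τ := by
  classical
  set S := ∑ a, A n k τ hk a with hSd
  let R : (Fin n × Fin n → ℚ) →ₗ[ℚ] (Fin n → ℚ) :=
    { toFun := fun P c => x * ∑ d, P (c, d) + y * ∑ d, P (d, c) + z / S * ∑ a, ∑ b, P (a, b)
      map_add' := by intro p q; funext c; simp [Finset.sum_add_distrib]; ring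
      map_smul' := by
        intro m p; funext c; simp [← Finset.mul_sum]; ring }
  refine ⟨R, ?_⟩
  have key : ∀ (f : Fin k ↪ Fin n) (c : Fin n), topkWeight w f c = x * ∑ d, pairContribution τ f c d +
      y * ∑ d, pairContribution τ f d c + z / S * ∑ a, ∑ b, pairContribution τ f a b := by
    intro f c
    obtain ⟨σ, hσ⟩ := exists_perm (f0 hk) f
    have hf : f = (f0 hk).trans σ.toEmbedding := by
      ext i; simp [hσ]
    obtain ⟨j, rfl⟩ := σ.surjective c
    have t1 : ∀ j, ∑ d, pairContribution τ f (σ j) d = A n k τ hk j := by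
      intro j
      rw [← Equiv.sum_comp σ, A]
      simp only [hf, pair_perm]
    have t2 : ∑ d, pairContribution τ f d (σ j) = B n k τ hk j := by
      rw [← Equiv.sum_comp σ, B]
      simp only [hf, pair_perm]
    have t3 : ∑ a, ∑ b, pairContribution τ f a b = S := by
      rw [← Equiv.sum_comp σ, hSd]
      simp only [t1]
    rw [t1, t2, t3, hf, weight_perm, weight_f0, hw]
    field_simp
  apply LinearMap.ext
  intro p
  funext c
  simp only [topkPositionalMap, generalizedPairsMap, R, LinearMap.coe_mk, AddHom.coe_mk,
    LinearMap.comp_apply]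
  simp only [key, mul_add, Finset.sum_add_distrib]
  congr 1
  · congr 1
    · rw [Finset.sum_comm, Finset.mul_sum]
      refine Finset.sum_congr rfl fun f _ => ?_
      rw [← Finset.mul_sum]; ring
    · rw [Finset.sum_comm, Finset.mul_sum]
      refine Finset.sum_congr rfl fun f _ => ?_
      rw [← Finset.mul_sum]; ring
  · have : ∑ a, ∑ b, ∑ f, p f * pairContribution τ f a b
        = ∑ f, p f * ∑ a, ∑ b, pairContribution τ f a b := by
      simp only [Finset.mul_sum]
      rw [Finset.sum_comm]
      rw [Finset.sum_comm]
      simp_rw [Finset.sum_comm (s := (univ : Finset (Fin n))) (t := (univ : Finset (Fin k ↪ Fin n)))]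
    rw [this, Finset.mul_sum]
    refine Finset.sum_congr rfl fun f _ => ?_
    ring

end TopkAux

open TopkAux


/-- For `n ≥ 3`, `1 ≤ k ≤ n − 2` and `0 ≤ τ ≤ 1`, the
positional map `T_w` on top-`k` profiles is recoverable from the generalized
pairs map `P^k_τ` if and only if the sum-zero part of the extension `w̄` lies
in the `ℚ`-span of the sum-zero parts of `b̄` and `b̄^τ`, where
`b(i) = b^τ(i) = n − 1 − i` for `i < k`, `b(k) = (n − k − 1)/2` and
`b^τ(k) = τ·(n − k − 1)`. -/
theorem topk_recoverable_iff_borda_like (n k : ℕ) (hn : 3 ≤ n)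
    (hk1 : 1 ≤ k) (hk2 : k ≤ n - 2)
    (τ : ℚ) (hτ0 : 0 ≤ τ) (hτ1 : τ ≤ 1)
    (w : Fin (k + 1) → ℚ) :
    (∃ R : (Fin n × Fin n → ℚ) →ₗ[ℚ] (Fin n → ℚ),
        topkPositionalMap n k w = R ∘ₗ generalizedPairsMap n k τ) ↔
      sumZeroPart n (extendWeight n k w) ∈
        Submodule.span ℚ
          {sumZeroPart n (extendWeight n k
              (fun i : Fin (k + 1) => if (i : ℕ) < k then (n : ℚ) - 1 - ((i : ℕ) : ℚ)
                else ((n : ℚ) - k - 1) / 2)),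
            sumZeroPart n (extendWeight n k
              (fun i : Fin (k + 1) => if (i : ℕ) < k then (n : ℚ) - 1 - ((i : ℕ) : ℚ)
                else τ * ((n : ℚ) - k - 1)))} := by
  have hkn : k < n := by omega
  have hn0 : n ≠ 0 := by omega
  have hkq : (k : ℚ) + 2 ≤ n := by
    have : k + 2 ≤ n := by omega
    exact_mod_cast this
  set bb := extendWeight n k
    (fun i : Fin (k + 1) => if (i : ℕ) < k then (n : ℚ) - 1 - ((i : ℕ) : ℚ)
      else ((n : ℚ) - k - 1) / 2) with hbb
  set bt := extendWeight n k
    (fun i : Fin (k + 1) => if (i : ℕ) < k then (n : ℚ) - 1 - ((i : ℕ) : ℚ)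
      else τ * ((n : ℚ) - k - 1)) with hbt
  have hA : ∀ j, bt j = A n k τ hkn.le j := by
    intro j
    rw [A_eq hkn, hbt, extendWeight]
    split_ifs <;> simp_all
  have hB : ∀ j, 2 * bb j = A n k τ hkn.le j - B n k τ hkn.le j + (n - 1) := by
    intro j
    rw [A_eq hkn, B_eq hkn, hbb, extendWeight]
    by_cases hj : (j : ℕ) < k
    · simp [hj]; ring
    · simp [hj]; ring
  rw [Submodule.mem_span_pair]
  constructor
  · rintro ⟨R, hR⟩
    obtain ⟨x, y, z, h⟩ := fwd hn hkn.le τ w R hR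
    refine ⟨-2 * y, x + y, ?_⟩
    symm
    refine szp_eq (z := z + y * (n - 1)) hn0 fun j => ?_
    rw [h, hA]
    linear_combination y * hB j
  · rintro ⟨x, y, h⟩
    refine bwd hkn.le τ w (x / 2 + y) (-x / 2)
      (x / 2 * (n - 1) + (∑ c, extendWeight n k w c) / n
        - x * ((∑ c, bb c) / n) - y * ((∑ c, bt c) / n)) ?_ ?_
    · apply ne_of_gt
      have hnn : ∀ j, 0 ≤ A n k τ hkn.le j := by
        intro j
        rw [A_eq hkn]
        split_ifs with hj
        · have : ((j : ℕ) : ℚ) < k := by exact_mod_cast hj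
          linarith
        · exact mul_nonneg hτ0 (by linarith)
      refine Finset.sum_pos' (fun j _ => hnn j) ⟨⟨0, by omega⟩, Finset.mem_univ _, ?_⟩
      rw [A_eq hkn, if_pos (show (0 : ℕ) < k by omega)]
      have : (1 : ℚ) ≤ k := by exact_mod_cast hk1
      simp; linarith
    · intro j
      have := congrFun h j
      simp only [sumZeroPart, Pi.add_apply, Pi.smul_apply, smul_eq_mul] at this
      have e1 := hA j
      have e2 := hB j
      linear_combination -this + x / 2 * e2 + y * e1
end

section
/- Let n ≥ 2 and 1 ≤ k ≤ n − 1, and let w : Fin (k+1) → ℚ be a weighting vector with extension w̄ : Fin n → ℚ (w̄(j) = w(j) for j < k and w̄(j) = w(k) for j ≥ k). For a top-k profile p : (Fin k ↪ Fin n) → ℚ, define the lifted full-ranking profile p̄ : Equiv.Perm (Fin n) → ℚ by p̄(σ) = (1/(n−k)!)·p(f_σ), where f_σ : Fin k ↪ Fin n is the embedding sending i to σ(i) (the top-k part of σ). Then the two positional outcomes agree: for every candidate c, Σ_{σ ∈ Equiv.Perm (Fin n)} p̄(σ)·w̄(σ⁻¹(c)) = T_w(p)(c). -/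
/-- The top-`k` part `f_σ : Fin k ↪ Fin n` of a full ranking
`σ : Equiv.Perm (Fin n)`, sending `i` to `σ(i)`. -/
def topkPart (n k : ℕ) (h : k ≤ n) (σ : Equiv.Perm (Fin n)) : Fin k ↪ Fin n :=
  (Fin.castLEEmb h).trans σ.toEmbedding

lemma topkPart_apply (n k : ℕ) (h : k ≤ n) (σ : Equiv.Perm (Fin n)) (i : Fin k) :
    topkPart n k h σ i = σ (Fin.castLE h i) := rfl

lemma topkWeight_topkPart (n k : ℕ) (h : k ≤ n) (w : Fin (k + 1) → ℚ)
    (σ : Equiv.Perm (Fin n)) (c : Fin n) :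
    topkWeight w (topkPart n k h σ) c = extendWeight n k w (σ⁻¹ c) := by
  obtain ⟨j, rfl⟩ := σ.surjective c
  have hinv : σ⁻¹ (σ j) = j := σ.symm_apply_apply j
  rw [hinv]
  unfold topkWeight extendWeight
  simp only [topkPart_apply, EmbeddingLike.apply_eq_iff_eq, ne_eq]
  by_cases hj : (j : ℕ) < k
  · rw [dif_pos hj, if_neg, add_zero, Finset.sum_eq_single (⟨j, hj⟩ : Fin k)]
    · rw [if_pos (by ext; rfl)]
      rfl
    · intro b _ hb
      rw [if_neg]
      intro hh
      apply hb
      ext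
      simp [← hh]
    · simp
    · intro hh
      exact hh ⟨j, hj⟩ (by ext; rfl)
  · have key : ∀ i : Fin k, ¬ Fin.castLE h i = j := by
      intro i hi
      apply hj
      rw [← hi]
      exact i.2
    rw [dif_neg hj, if_pos key, Finset.sum_eq_zero, zero_add]
    intro i _
    rw [if_neg (key i)]

lemma exists_topkPart (n k : ℕ) (h : k ≤ n) (f : Fin k ↪ Fin n) :
    ∃ σ, topkPart n k h σ = f := by
  classical
  let e : {x // x ∈ Set.range (Fin.castLEEmb h)} ≃ {x // x ∈ Set.range f} :=
    (Equiv.ofInjective _ (Fin.castLEEmb h).injective).symm.trans (Equiv.ofInjective _ f.injective)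
  refine ⟨e.extendSubtype, ?_⟩
  ext1 i
  rw [topkPart_apply, Equiv.extendSubtype_apply_of_mem e (Fin.castLE h i) ⟨i, rfl⟩]
  have : (⟨Fin.castLE h i, ⟨i, rfl⟩⟩ : {x // x ∈ Set.range (Fin.castLEEmb h)})
      = Equiv.ofInjective _ (Fin.castLEEmb h).injective i := rfl
  rw [this]
  simp only [e]
  rw [Equiv.trans_apply, Equiv.symm_apply_apply]
  rfl

lemma card_fiber_one (n k : ℕ) (h : k ≤ n) :
    (Finset.univ.filter fun σ : Equiv.Perm (Fin n) =>
      topkPart n k h σ = topkPart n k h 1).card = (n - k).factorial := by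
  classical
  have h1 := Fintype.card_congr
    (Equiv.Perm.subtypeEquivSubtypePerm (fun x : Fin n => ¬ (x : ℕ) < k))
  rw [Fintype.card_perm, Fintype.card_subtype_compl, Fintype.card_fin] at h1
  have h2 : Fintype.card {x : Fin n // (x : ℕ) < k} = k := by
    rw [Fintype.card_congr (Fin.castLEquiv h).symm, Fintype.card_fin]
  rw [h2, Fintype.card_subtype] at h1
  rw [h1]
  congr 1
  ext σ
  simp only [Finset.mem_filter, Finset.mem_univ, true_and, not_not]
  constructor
  · intro hs a ha
    exact DFunLike.congr_fun hs (⟨a, ha⟩ : Fin k)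
  · intro hs
    ext1 i
    exact hs _ i.2

lemma card_fiber (n k : ℕ) (h : k ≤ n) (f : Fin k ↪ Fin n) :
    (Finset.univ.filter fun σ : Equiv.Perm (Fin n) => topkPart n k h σ = f).card
      = (n - k).factorial := by
  obtain ⟨τ, rfl⟩ := exists_topkPart n k h f
  rw [← card_fiber_one n k h]
  refine Finset.card_equiv (Equiv.mulLeft τ⁻¹) ?_
  intro σ
  simp only [Finset.mem_filter, Finset.mem_univ, true_and, DFunLike.ext_iff, topkPart_apply,
    Equiv.coe_mulLeft, Equiv.Perm.mul_apply, Equiv.Perm.inv_eq_iff_eq, Equiv.Perm.one_apply]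

/-- For `n ≥ 2`, `1 ≤ k ≤ n − 1`, a weighting vector
`w : Fin (k+1) → ℚ` with extension `w̄`, and a top-`k` profile `p`, the lifted
full-ranking profile `p̄(σ) = p(f_σ)/(n−k)!` has the same positional outcome
with respect to `w̄` as `p` does with respect to `w`. -/
theorem lifted_profile_same_outcome (n k : ℕ) (hn : 2 ≤ n)
    (hk1 : 1 ≤ k) (hk2 : k ≤ n - 1)
    (w : Fin (k + 1) → ℚ) (p : (Fin k ↪ Fin n) → ℚ) (c : Fin n) :
    ∑ σ : Equiv.Perm (Fin n),
        ((1 / ((n - k).factorial : ℚ)) * p (topkPart n k (by omega) σ)) *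
          extendWeight n k w (σ⁻¹ c) =
      ∑ f : Fin k ↪ Fin n, p f * topkWeight w f c := by
  have h : k ≤ n := by omega
  have hf : ((n - k).factorial : ℚ) ≠ 0 := by exact_mod_cast (n - k).factorial_ne_zero
  rw [← Finset.sum_fiberwise (s := Finset.univ) (g := fun σ => topkPart n k h σ)]
  refine Finset.sum_congr rfl fun f _ => ?_
  have key : ∀ σ ∈ Finset.univ.filter (fun σ => topkPart n k h σ = f),
      ((1 / ((n - k).factorial : ℚ)) * p (topkPart n k h σ)) * extendWeight n k w (σ⁻¹ c)
        = (1 / ((n - k).factorial : ℚ)) * p f * topkWeight w f c := by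
    intro σ hσ
    obtain rfl := (Finset.mem_filter.mp hσ).2
    rw [topkWeight_topkPart]
  rw [Finset.sum_congr rfl key, Finset.sum_const, card_fiber, nsmul_eq_mul]
  field_simp
end
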